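/- arXiv:2308.01388 — 2 statements merged into one kernel-verified Lean document; each statement's English description precedes it below -/
import Mathlib

section
/- (Theorem 4.1(iv), third case.) Uniformly over all λ ∈ C⁺ and all X ∈ a with x3 ≥ x1 ≥ x2 such that β_λ ≥ α_λ and α_λ α_{X⁺} ≤ β_λ β_{X⁺}, one has E_k(X,λ) ≍ e^{⟨λ,X⁺⟩} / [ (1+α_λ α_{X⁺})^{k+1} (1+β_λ β_{X⁺})^{k} (1+γ_λ γ_{X⁺})^{k+1} ]. -/
open Real MeasureTheory

/-- The rank-one Dunkl kernel `E_k^{rk1}(x,v)`. -/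
noncomputable def Erk1 (k x v : ℝ) : ℝ :=
  (Real.Gamma (k + 1/2) / (Real.sqrt Real.pi * Real.Gamma k)) *
    ∫ z in (-1 : ℝ)..1, Real.exp (z * x * v) * (1 - z) ^ (k - 1) * (1 + z) ^ k

/-- The normalized modified Bessel function `𝒥_a(y)`, for `a > -1/2`. -/
noncomputable def besselJ (a y : ℝ) : ℝ :=
  (Real.Gamma (a + 1) / (Real.sqrt Real.pi * Real.Gamma (a + 1/2))) *
    ∫ z in (-1 : ℝ)..1, Real.exp (y * z) * (1 - z ^ 2) ^ (a - 1/2)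

/-- `W_k(λ,ν)`. -/
noncomputable def Wk (k l1 l2 l3 n1 n2 : ℝ) : ℝ :=
  ((l1 - n1) * (l1 - n2) * (n1 - l2) * (l2 - n2) * (n1 - l3) * (n2 - l3)) ^ (k - 1)

/-- `V(λ) = (λ1-λ2)(λ1-λ3)(λ2-λ3)`. -/
def Vlam (l1 l2 l3 : ℝ) : ℝ := (l1 - l2) * (l1 - l3) * (l2 - l3)

/-- The `A₂` Dunkl kernel `E_k(X,λ)`, defined via the rank-one kernel formula. -/
noncomputable def EkA2 (k x1 x2 x3 l1 l2 l3 : ℝ) : ℝ :=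
  (3 * Real.Gamma (3 * k) / (Vlam l1 l2 l3 ^ (2 * k) * Real.Gamma k ^ 2)) *
    ∫ n2 in l3..l2, ∫ n1 in l2..l1,
      ((n1 - l2) * (l1 - n2) * Erk1 k ((x1 - x2) / 2) (n1 - n2)
        + (l1 - n1) * (l2 - n2) * Erk1 k (-(x1 - x2) / 2) (n1 - n2))
      * ((n1 - l3) * (n2 - l3)) * Real.exp ((x1 + x2 - 2 * x3) * (n1 + n2) / 2)
      * Wk k l1 l2 l3 n1 n2


lemma aux_expb (p : ℝ) (hp : 0 < p) :
    ∃ C : ℝ, 0 < C ∧ ∀ y : ℝ, 0 ≤ y → Real.exp (-(y/2)) ≤ C * (1 + y) ^ (-p) := by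
  set m : ℝ := max 1 (2*p) with hm
  have hm1 : 1 ≤ m := le_max_left _ _
  have hm2 : 2*p ≤ m := le_max_right _ _
  have hm0 : 0 < m := by linarith
  refine ⟨m ^ p, by positivity, fun y hy => ?_⟩
  have h1 : 1 + y ≤ m * Real.exp (y/m) := by
    have := Real.add_one_le_exp (y/m)
    have h2 : m * (y/m + 1) ≤ m * Real.exp (y/m) := by gcongr
    have h3 : m * (y/m + 1) = y + m := by field_simp
    linarith
  have h2 : (1+y)^p ≤ m^p * Real.exp (y/2) := by
    calc (1+y)^p ≤ (m * Real.exp (y/m))^p := by gcongr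
      _ = m^p * Real.exp (y/m*p) := by
        rw [Real.mul_rpow hm0.le (Real.exp_pos _).le, ← Real.exp_mul]
      _ ≤ m^p * Real.exp (y/2) := by
        gcongr
        rw [div_mul_eq_mul_div, div_le_div_iff₀ hm0 (by norm_num)]
        nlinarith
  rw [Real.rpow_neg (by linarith), ← div_eq_mul_inv, le_div_iff₀ (by positivity), Real.exp_neg,
    inv_mul_le_iff₀ (Real.exp_pos _), mul_comm]
  exact h2

lemma aux_powb (r : ℝ) : ∃ m M : ℝ, 0 < m ∧ 0 < M ∧ ∀ x : ℝ, 1/2 ≤ x → x ≤ 1 → m ≤ x^r ∧ x^r ≤ M := by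
  rcases le_total 0 r with h | h
  · refine ⟨(1/2)^r, 1, by positivity, by norm_num, fun x h1 h2 => ⟨?_, ?_⟩⟩
    · exact Real.rpow_le_rpow (by norm_num) h1 h
    · exact Real.rpow_le_one (by linarith) h2 h
  · refine ⟨1, (1/2)^r, by norm_num, by positivity, fun x h1 h2 => ⟨?_, ?_⟩⟩
    · exact Real.one_le_rpow_of_pos_of_le_one_of_nonpos (by linarith) h2 h
    · exact Real.rpow_le_rpow_of_nonpos (by norm_num) h1 h

lemma aux_mono1 {a b : ℝ} (hab : a ≤ b) {h g : ℝ → ℝ}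
    (hm : AEStronglyMeasurable h (volume.restrict (Set.uIoc a b)))
    (hg : IntervalIntegrable g volume a b)
    (H : ∀ x ∈ Set.Ioo a b, 0 ≤ h x ∧ h x ≤ g x) :
    IntervalIntegrable h volume a b ∧ ∫ x in a..b, h x ≤ ∫ x in a..b, g x := by
  have hi : IntervalIntegrable h volume a b := by
    refine hg.mono_fun' hm ?_
    rw [Set.uIoc_of_le hab]
    have : volume.restrict (Set.Ioc a b) = volume.restrict (Set.Ioo a b) :=
      (Measure.restrict_congr_set Ioo_ae_eq_Ioc).symm
    rw [this]
    refine (ae_restrict_iff' measurableSet_Ioo).2 (Filter.Eventually.of_forall fun x hx => ?_)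
    show ‖h x‖ ≤ g x
    rw [Real.norm_of_nonneg (H x hx).1]
    exact (H x hx).2
  exact ⟨hi, intervalIntegral.integral_mono_on_of_le_Ioo hab hi hg fun x hx => (H x hx).2⟩

lemma aux_F (p q : ℝ) (hp : 0 < p) (hq : 0 < q) :
    ∃ c C : ℝ, 0 < c ∧ 0 < C ∧ ∀ y : ℝ, 0 ≤ y →
      IntervalIntegrable (fun w : ℝ => w^(p-1) * (1-w)^(q-1) * Real.exp (-y*w)) volume 0 1 ∧
      c * (1+y)^(-p) ≤ ∫ w in (0:ℝ)..1, w^(p-1) * (1-w)^(q-1) * Real.exp (-y*w) ∧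
      ∫ w in (0:ℝ)..1, w^(p-1) * (1-w)^(q-1) * Real.exp (-y*w) ≤ C * (1+y)^(-p) := by
  obtain ⟨D, hD, hDy⟩ := aux_expb p hp
  obtain ⟨m, M, hm, hM, hmM⟩ := aux_powb (q-1)
  obtain ⟨m', M', hm', hM', hmM'⟩ := aux_powb (p-1)
  refine ⟨m * Real.exp (-1) * ((1/2)^p / p), M * Real.exp 1 * Real.Gamma p + M' * D / q,
    by positivity, by have := Real.Gamma_pos_of_pos hp; positivity, fun y hy => ?_⟩
  have hmeas : Measurable (fun w : ℝ => w^(p-1) * (1-w)^(q-1) * Real.exp (-y*w)) := by fun_prop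
  have hio : IntegrableOn (fun w : ℝ => w^(p-1) * Real.exp (-((1+y)*w))) (Set.Ioi 0) := by
    have := integrableOn_rpow_mul_exp_neg_mul_rpow (s := p-1) (p := 1) (b := 1+y) (by linarith)
      one_pos (by linarith)
    refine this.congr_fun (fun w _ => ?_) measurableSet_Ioi
    simp only [Real.rpow_one, neg_mul]
  have hi1 : IntervalIntegrable (fun w : ℝ => w^(p-1) * Real.exp (-((1+y)*w))) volume 0 1 := by
    rw [intervalIntegrable_iff_integrableOn_Ioc_of_le zero_le_one]
    exact hio.mono_set Set.Ioc_subset_Ioi_self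
  have hI1 : ∫ w in (0:ℝ)..1, w^(p-1) * Real.exp (-((1+y)*w)) ≤ Real.Gamma p * (1+y)^(-p) := by
    rw [intervalIntegral.integral_of_le zero_le_one]
    have := Real.integral_rpow_mul_exp_neg_mul_Ioi hp (r := 1+y) (by linarith)
    rw [one_div, Real.inv_rpow (by linarith), ← Real.rpow_neg (by linarith)] at this
    rw [mul_comm (Real.Gamma p), ← this]
    refine setIntegral_mono_set hio ?_ (Filter.Eventually.of_forall Set.Ioc_subset_Ioi_self)
    refine (ae_restrict_iff' measurableSet_Ioi).2 (Filter.Eventually.of_forall fun x hx => ?_)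
    have : (0:ℝ) < x := hx
    simp only [Pi.zero_apply]
    positivity
  have hi2' : IntervalIntegrable (fun w : ℝ => w^(q-1)) volume 0 1 :=
    intervalIntegral.intervalIntegrable_rpow' (by linarith)
  have hi2 : IntervalIntegrable (fun w : ℝ => (1-w)^(q-1)) volume 0 1 := by
    have := (hi2'.comp_sub_left 1).symm
    simpa using this
  have hI2 : ∫ w in (0:ℝ)..1, (1-w)^(q-1) = 1/q := by
    have := intervalIntegral.integral_comp_sub_left (a := 0) (b := 1) (fun w : ℝ => w^(q-1)) 1
    rw [this, sub_self, sub_zero, integral_rpow (Or.inl (by linarith))]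
    rw [sub_add_cancel, Real.one_rpow, Real.zero_rpow hq.ne', sub_zero]
  have hup := aux_mono1 (zero_le_one (α := ℝ)) hmeas.aestronglyMeasurable
    (((hi1.const_mul (M * Real.exp 1))).add (hi2.const_mul (M' * (D * (1+y)^(-p))))) (by
      intro w hw
      obtain ⟨h0, h1⟩ := hw
      have h1' : 0 < 1 - w := by linarith
      refine ⟨by positivity, ?_⟩
      rcases le_total w (1/2) with h | h
      · have hb := (hmM (1-w) (by linarith) (by linarith)).2
        have he : Real.exp (-y*w) ≤ Real.exp 1 * Real.exp (-((1+y)*w)) := by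
          rw [← Real.exp_add]; apply Real.exp_le_exp.2; nlinarith
        have : w^(p-1) * (1-w)^(q-1) * Real.exp (-y*w) ≤
            w^(p-1) * M * (Real.exp 1 * Real.exp (-((1+y)*w))) := by gcongr
        have h2 : 0 ≤ M' * (D * (1+y)^(-p)) * (1-w)^(q-1) := by positivity
        linarith
      · have hb := (hmM' w (by linarith) (by linarith)).2
        have he : Real.exp (-y*w) ≤ D * (1+y)^(-p) := by
          refine le_trans ?_ (hDy y hy)
          apply Real.exp_le_exp.2; nlinarith
        have : w^(p-1) * (1-w)^(q-1) * Real.exp (-y*w) ≤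
            M' * (1-w)^(q-1) * (D * (1+y)^(-p)) := by gcongr
        have h2 : 0 ≤ M * Real.exp 1 * (w^(p-1) * Real.exp (-((1+y)*w))) := by positivity
        linarith)
  refine ⟨hup.1, ?_, ?_⟩
  · set δ : ℝ := 1/2 * (1+y)⁻¹ with hδ
    have hδ0 : 0 < δ := by positivity
    have hinv : (1+y)⁻¹ ≤ 1 := inv_le_one_of_one_le₀ (by linarith)
    have hδ1 : δ ≤ 1/2 := by linarith
    have hyδ : (1+y) * δ = 1/2 := by rw [hδ]; field_simp
    have hsub : IntervalIntegrable (fun w : ℝ => w^(p-1) * (1-w)^(q-1) * Real.exp (-y*w)) volume 0 δ :=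
      hup.1.mono_set (by
        rw [Set.uIcc_of_le hδ0.le, Set.uIcc_of_le zero_le_one]
        exact Set.Icc_subset_Icc_right (by linarith))
    have e1 : ∫ w in (0:ℝ)..δ, w^(p-1) * (1-w)^(q-1) * Real.exp (-y*w) ≤
        ∫ w in (0:ℝ)..1, w^(p-1) * (1-w)^(q-1) * Real.exp (-y*w) := by
      refine intervalIntegral.integral_mono_interval le_rfl hδ0.le (by linarith) ?_ hup.1
      refine (ae_restrict_iff' measurableSet_Ioc).2 (Filter.Eventually.of_forall fun x hx => ?_)
      have h0 := hx.1
      have h1 : 0 ≤ 1 - x := by linarith [hx.2]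
      simp only [Pi.zero_apply]
      positivity
    refine le_trans ?_ e1
    have hi3 : IntervalIntegrable (fun w : ℝ => m * Real.exp (-1) * w^(p-1)) volume 0 δ :=
      (intervalIntegral.intervalIntegrable_rpow' (by linarith)).const_mul _
    have e2 := intervalIntegral.integral_mono_on_of_le_Ioo hδ0.le hi3 hsub (by
      intro w hw
      have h0 := hw.1
      have h1 : w < δ := hw.2
      have hb := (hmM (1-w) (by linarith) (by linarith)).1
      have h1' : 0 < 1 - w := by linarith
      have he : Real.exp (-1) ≤ Real.exp (-y*w) := by
        apply Real.exp_le_exp.2; nlinarith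
      calc m * Real.exp (-1) * w^(p-1) = w^(p-1) * m * Real.exp (-1) := by ring
        _ ≤ _ := by gcongr)
    refine le_trans (le_of_eq ?_) e2
    rw [intervalIntegral.integral_const_mul, integral_rpow (Or.inl (by linarith)), sub_add_cancel,
      Real.zero_rpow hp.ne', sub_zero, hδ, Real.mul_rpow (by norm_num) (by positivity),
      Real.inv_rpow (by linarith), Real.rpow_neg (by linarith)]
    ring
  · refine hup.2.trans ?_
    rw [intervalIntegral.integral_add (hi1.const_mul _) (hi2.const_mul _),
      intervalIntegral.integral_const_mul, intervalIntegral.integral_const_mul, hI2]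
    have : M * Real.exp 1 * ∫ w in (0:ℝ)..1, w^(p-1) * Real.exp (-((1+y)*w)) ≤
      M * Real.exp 1 * (Real.Gamma p * (1+y)^(-p)) := by gcongr
    refine (add_le_add_left this _).trans (le_of_eq ?_)
    ring

lemma aux_J (p q : ℝ) (hp : 0 < p) (hq : 0 < q) :
    ∃ c C : ℝ, 0 < c ∧ 0 < C ∧ ∀ lo hi y : ℝ, lo < hi → 0 ≤ y →
      IntervalIntegrable (fun u : ℝ => (u-lo)^(p-1) * (hi-u)^(q-1) * Real.exp (-y*(u-lo))) volume lo hi ∧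
      c * ((hi-lo)^(p+q-1) * (1+y*(hi-lo))^(-p)) ≤
        ∫ u in lo..hi, (u-lo)^(p-1) * (hi-u)^(q-1) * Real.exp (-y*(u-lo)) ∧
      ∫ u in lo..hi, (u-lo)^(p-1) * (hi-u)^(q-1) * Real.exp (-y*(u-lo)) ≤
        C * ((hi-lo)^(p+q-1) * (1+y*(hi-lo))^(-p)) := by
  obtain ⟨c, C, hc, hC, H⟩ := aux_F p q hp hq
  refine ⟨c, C, hc, hC, fun lo hi y hlh hy => ?_⟩
  set N := hi - lo with hN
  have hN0 : 0 < N := by linarith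
  obtain ⟨h1, h2, h3⟩ := H (y*N) (by positivity)
  have key : ∀ w ∈ Set.Icc (0:ℝ) 1, ((N*w+lo)-lo)^(p-1) * (hi-(N*w+lo))^(q-1) * Real.exp (-y*((N*w+lo)-lo))
      = N^(p-1) * N^(q-1) * (w^(p-1) * (1-w)^(q-1) * Real.exp (-(y*N)*w)) := by
    intro w hw
    have e1 : N*w+lo-lo = N*w := by ring
    have e2 : hi-(N*w+lo) = N*(1-w) := by rw [hN]; ring
    rw [e1, e2, Real.mul_rpow hN0.le hw.1, Real.mul_rpow hN0.le (by linarith [hw.2])]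
    have e3 : -y*(N*w) = -(y*N)*w := by ring
    rw [e3]; ring
  have hint : ∫ u in lo..hi, (u-lo)^(p-1) * (hi-u)^(q-1) * Real.exp (-y*(u-lo)) =
      N^(p+q-1) * ∫ w in (0:ℝ)..1, w^(p-1) * (1-w)^(q-1) * Real.exp (-(y*N)*w) := by
    have := intervalIntegral.smul_integral_comp_mul_add (a := 0) (b := 1)
      (fun u : ℝ => (u-lo)^(p-1) * (hi-u)^(q-1) * Real.exp (-y*(u-lo))) N lo
    rw [mul_zero, zero_add, mul_one, hN, sub_add_cancel, ← hN] at this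
    rw [← this, intervalIntegral.integral_congr (g := fun w => N^(p-1) * N^(q-1) * (w^(p-1) * (1-w)^(q-1) * Real.exp (-(y*N)*w)))
      (by rw [Set.uIcc_of_le zero_le_one]; intro w hw; exact key w hw), intervalIntegral.integral_const_mul,
      smul_eq_mul, ← Real.rpow_add hN0, ← mul_assoc]
    congr 1
    rw [show p+q-1 = 1 + (p-1+(q-1)) by ring, Real.rpow_add hN0 1, Real.rpow_one]
  refine ⟨?_, ?_, ?_⟩
  · have := ((h1.const_mul (N^(p-1) * N^(q-1))).comp_sub_right (lo/N)).comp_mul_left (c := N⁻¹)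
    have e1 : (0 + lo/N)/N⁻¹ = lo := by field_simp; ring
    have e2 : (1 + lo/N)/N⁻¹ = hi := by field_simp; rw [hN]; ring
    rw [e1, e2] at this
    refine this.congr ?_
    rw [Set.uIoc_of_le hlh.le]
    intro u hu
    have := key (N⁻¹*u - lo/N) (by
      have : N⁻¹*u - lo/N = (u-lo)/N := by field_simp
      rw [this]
      exact ⟨div_nonneg (by linarith [hu.1]) hN0.le, by rw [div_le_one hN0]; linarith [hu.2]⟩)
    have e : N*(N⁻¹*u - lo/N)+lo = u := by field_simp; ring
    rw [e] at this
    exact this.symm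
  · rw [hint]
    calc _ = N^(p+q-1) * (c * (1+y*N)^(-p)) := by ring
      _ ≤ _ := by gcongr
  · rw [hint]
    calc _ ≤ N^(p+q-1) * (C * (1+y*N)^(-p)) := by gcongr
      _ = _ := by ring

lemma aux_Erk (k : ℝ) (hk : 0 < k) :
    ∃ c C : ℝ, 0 < c ∧ 0 < C ∧ ∀ x v : ℝ, 0 ≤ x * v →
      c * (Real.exp (x*v) * (1+2*(x*v))^(-k)) ≤ Erk1 k x v ∧
      Erk1 k x v ≤ C * (Real.exp (x*v) * (1+2*(x*v))^(-k)) ∧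
      0 ≤ Erk1 k (-x) v ∧
      Erk1 k (-x) v ≤ C * (Real.exp (x*v) * (1+2*(x*v))^(-(k+1))) := by
  obtain ⟨c1, C1, hc1, hC1, H1⟩ := aux_J k (k+1) hk (by linarith)
  obtain ⟨c2, C2, hc2, hC2, H2⟩ := aux_J (k+1) k (by linarith) hk
  set G := Real.Gamma (k + 1/2) / (Real.sqrt Real.pi * Real.Gamma k) with hG
  have hG0 : 0 < G := by
    have := Real.Gamma_pos_of_pos hk
    have := Real.Gamma_pos_of_pos (show 0 < k + 1/2 by linarith)
    have := Real.pi_pos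
    positivity
  refine ⟨G * c1 * 2^(2*k), G * (C1 + C2) * 2^(2*k), by positivity, by positivity, fun x v h => ?_⟩
  obtain ⟨-, h1, h2⟩ := H1 (-1) 1 (x*v) (by norm_num) h
  obtain ⟨-, h3, h4⟩ := H2 (-1) 1 (x*v) (by norm_num) h
  have i1 : ∫ z in (-1 : ℝ)..1, Real.exp (z * x * v) * (1 - z) ^ (k - 1) * (1 + z) ^ k
      = Real.exp (x*v) * ∫ u in (-1:ℝ)..1, (u-(-1))^(k-1) * (1-u)^(k+1-1) * Real.exp (-(x*v)*(u-(-1))) := by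
    rw [← intervalIntegral.integral_const_mul]
    have := intervalIntegral.integral_comp_neg (a := -1) (b := 1)
      (fun z : ℝ => Real.exp (z * x * v) * (1 - z) ^ (k - 1) * (1 + z) ^ k)
    rw [neg_neg] at this
    rw [← this]
    congr 1
    ext u
    have e : Real.exp (-u*x*v) = Real.exp (x*v) * Real.exp (-(x*v)*(u-(-1))) := by
      rw [← Real.exp_add]; congr 1; ring
    rw [e, show 1 - -u = u - (-1) by ring, show k+1-1 = k by ring, show 1 + -u = 1 - u by ring]
    ring
  have i2 : ∫ z in (-1 : ℝ)..1, Real.exp (z * (-x) * v) * (1 - z) ^ (k - 1) * (1 + z) ^ k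
      = Real.exp (x*v) * ∫ u in (-1:ℝ)..1, (u-(-1))^(k+1-1) * (1-u)^(k-1) * Real.exp (-(x*v)*(u-(-1))) := by
    rw [← intervalIntegral.integral_const_mul]
    congr 1
    ext u
    have e : Real.exp (u*(-x)*v) = Real.exp (x*v) * Real.exp (-(x*v)*(u-(-1))) := by
      rw [← Real.exp_add]; congr 1; ring
    rw [e, show k+1-1 = k by ring, show u - (-1) = 1 + u by ring]
    ring
  rw [show (1:ℝ) - (-1) = 2 by norm_num, show k+(k+1)-1 = 2*k by ring, mul_comm (x*v) 2] at h1 h2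
  rw [show (1:ℝ) - (-1) = 2 by norm_num, show k+1+k-1 = 2*k by ring, mul_comm (x*v) 2] at h3 h4
  simp only [Erk1]
  rw [← hG, i1, i2]
  have hpos : 0 < 1 + 2*(x*v) := by linarith
  refine ⟨?_, ?_, ?_, ?_⟩
  · calc _ = G * (Real.exp (x*v) * (c1 * (2^(2*k) * (1+2*(x*v))^(-k)))) := by ring
      _ ≤ _ := by gcongr
  · calc _ ≤ G * (Real.exp (x*v) * (C1 * (2^(2*k) * (1+2*(x*v))^(-k)))) := by gcongr
      _ ≤ G * (Real.exp (x*v) * ((C1 + C2) * (2^(2*k) * (1+2*(x*v))^(-k)))) := by gcongr; linarith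
      _ = _ := by ring
  · refine mul_nonneg hG0.le (mul_nonneg (Real.exp_pos _).le (le_trans ?_ h3))
    positivity
  · calc _ ≤ G * (Real.exp (x*v) * (C2 * (2^(2*k) * (1+2*(x*v))^(-(k+1))))) := by gcongr
      _ ≤ G * (Real.exp (x*v) * ((C1 + C2) * (2^(2*k) * (1+2*(x*v))^(-(k+1))))) := by gcongr; linarith
      _ = _ := by ring

lemma aux_measErk (k x : ℝ) : Measurable (fun v => Erk1 k x v) := by
  unfold Erk1
  refine Measurable.const_mul ?_ _
  have h : (fun v : ℝ => ∫ z in (-1 : ℝ)..1, Real.exp (z * x * v) * (1 - z) ^ (k - 1) * (1 + z) ^ k)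
      = fun v : ℝ => ∫ z in Set.Ioc (-1:ℝ) 1, Real.exp (z * x * v) * (1 - z) ^ (k - 1) * (1 + z) ^ k := by
    ext v
    rw [intervalIntegral.integral_of_le (by norm_num)]
  rw [h]
  refine (StronglyMeasurable.integral_prod_right
    (f := fun v z : ℝ => Real.exp (z * x * v) * (1 - z) ^ (k - 1) * (1 + z) ^ k) ?_).measurable
  apply Measurable.stronglyMeasurable
  unfold Function.uncurry
  fun_prop

lemma aux_dbl {a b c d : ℝ} (hab : a ≤ b) (hcd : c ≤ d) (H : ℝ → ℝ → ℝ)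
    (hm : Measurable (Function.uncurry H)) (f1 f2 g1 g2 : ℝ → ℝ)
    (hf1 : IntervalIntegrable f1 volume a b) (hf2 : IntervalIntegrable f2 volume a b)
    (hg1 : IntervalIntegrable g1 volume c d) (hg2 : IntervalIntegrable g2 volume c d)
    (hB : ∀ t ∈ Set.Ioo a b, ∀ s ∈ Set.Ioo c d, 0 ≤ f1 t * g1 s ∧ f1 t * g1 s ≤ H t s ∧ H t s ≤ f2 t * g2 s) :
    (∫ t in a..b, f1 t) * (∫ s in c..d, g1 s) ≤ ∫ t in a..b, ∫ s in c..d, H t s ∧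
    ∫ t in a..b, ∫ s in c..d, H t s ≤ (∫ t in a..b, f2 t) * (∫ s in c..d, g2 s) := by
  have inner : ∀ t ∈ Set.Ioo a b, 0 ≤ ∫ s in c..d, H t s ∧
      f1 t * (∫ s in c..d, g1 s) ≤ ∫ s in c..d, H t s ∧
      ∫ s in c..d, H t s ≤ f2 t * (∫ s in c..d, g2 s) := by
    intro t ht
    have hmt : Measurable (H t) := hm.of_uncurry_left
    obtain ⟨i1, i2⟩ := aux_mono1 hcd hmt.aestronglyMeasurable (hg2.const_mul (f2 t))
      (fun s hs => ⟨(hB t ht s hs).1.trans (hB t ht s hs).2.1, (hB t ht s hs).2.2⟩)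
    have i3 := intervalIntegral.integral_mono_on_of_le_Ioo hcd (hg1.const_mul (f1 t)) i1
      (fun s hs => (hB t ht s hs).2.1)
    have i4 := intervalIntegral.integral_mono_on_of_le_Ioo hcd
      (intervalIntegrable_const (c := (0:ℝ))) i1
      (fun s hs => (hB t ht s hs).1.trans (hB t ht s hs).2.1)
    rw [intervalIntegral.integral_const_mul] at i2 i3
    rw [intervalIntegral.integral_const, smul_zero] at i4
    exact ⟨i4, i3, i2⟩
  have hmo : Measurable (fun t => ∫ s in c..d, H t s) := by
    simp_rw [intervalIntegral.integral_of_le hcd]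
    exact (StronglyMeasurable.integral_prod_right (f := H) hm.stronglyMeasurable).measurable
  obtain ⟨o1, o2⟩ := aux_mono1 hab hmo.aestronglyMeasurable
    (hf2.mul_const (∫ s in c..d, g2 s)) (fun t ht => ⟨(inner t ht).1, (inner t ht).2.2⟩)
  have o3 := intervalIntegral.integral_mono_on_of_le_Ioo hab (hf1.mul_const (∫ s in c..d, g1 s)) o1
    (fun t ht => (inner t ht).2.1)
  rw [intervalIntegral.integral_mul_const] at o2 o3
  exact ⟨o3, o2⟩

lemma aux_prod (r : ℝ) {a b c d e f : ℝ} (ha : 0 < a) (hb : 0 < b) (hc : 0 < c) (hd : 0 < d)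
    (he : 0 < e) (hf : 0 < f) :
    (a*b*c*d*e*f)^r = a^r*b^r*c^r*d^r*e^r*f^r := by
  rw [Real.mul_rpow (by positivity) hf.le, Real.mul_rpow (by positivity) he.le,
    Real.mul_rpow (by positivity) hd.le, Real.mul_rpow (by positivity) hc.le,
    Real.mul_rpow ha.le hb.le]

lemma aux_pk (k : ℝ) {a : ℝ} (ha : 0 < a) : a^k = a * a^(k-1) := by
  rw [Real.rpow_sub_one ha.ne']; field_simp

lemma aux_up {k s s' t t' g h B K Q1 Q2 L es et E1 E2 ex : ℝ} (hk : 0 < k) (hs : 0 < s)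
    (hs' : 0 < s') (ht : 0 < t) (ht' : 0 < t') (hg : 0 < g) (hh : 0 < h)
    (hK : 0 < K) (hQ2 : 0 < Q2) (hL : 0 < L) (hes : 0 < es) (hQ1 : 0 < Q1)
    (het : 0 < et) (h1 : E1 * ex ≤ K * Q1 * (L * es * et)) (h2 : E2 * ex ≤ K * Q2 * (L * es * et))
    (htg : t' ≤ g) (hgB : g ≤ 2*B) (hhB : h ≤ 2*B) :
    (s*g*E1 + s'*t'*E2)*(h*t)*ex*(s'*g*s*t'*h*t)^(k-1) ≤
      (t^(k+1-1)*t'^(k-1)*et) * (K*L*((2*B)^k*(2*B)^k) *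
        (Q1*(s^(k+1-1)*s'^(k-1)*es) + Q2*(s^(k-1)*s'^(k+1-1)*es))) := by
  rw [aux_prod _ hs' hg hs ht' hh ht, add_sub_cancel_right]
  have hg2 : g^k ≤ (2*B)^k := by gcongr
  have hh2 : h^k ≤ (2*B)^k := by gcongr
  have hB2 : 0 < 2*B := by linarith
  calc (s*g*E1 + s'*t'*E2)*(h*t)*ex*(s'^(k-1)*g^(k-1)*s^(k-1)*t'^(k-1)*h^(k-1)*t^(k-1))
      = (s*g*(E1*ex) + s'*t'*(E2*ex))*((h*t)*(s'^(k-1)*g^(k-1)*s^(k-1)*t'^(k-1)*h^(k-1)*t^(k-1))) := by ring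
    _ ≤ (s*g*(K * Q1 * (L * es * et)) + s'*g*(K * Q2 * (L * es * et)))*((h*t)*(s'^(k-1)*g^(k-1)*s^(k-1)*t'^(k-1)*h^(k-1)*t^(k-1))) := by
        have : s'*t'*(E2*ex) ≤ s'*g*(K * Q2 * (L * es * et)) := by
          calc _ ≤ s'*t'*(K * Q2 * (L * es * et)) := by gcongr
            _ ≤ _ := by gcongr
        gcongr
    _ = (t^k*t'^(k-1)*et) * (K*L*(g^k*h^k) * (Q1*(s^k*s'^(k-1)*es) + Q2*(s^(k-1)*s'^k*es))) := by
        rw [aux_pk k ht, aux_pk k hg, aux_pk k hh, aux_pk k hs, aux_pk k hs']; ring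
    _ ≤ _ := by gcongr

lemma aux_lo {k s s' t t' g h B K L es et E1 E2 ex : ℝ} (hk : 0 < k) (hs : 0 < s)
    (hs' : 0 < s') (ht : 0 < t) (ht' : 0 < t') (hg : 0 < g) (hh : 0 < h) (hB : 0 < B)
    (hK : 0 < K) (hL : 0 < L) (hes : 0 < es)
    (het : 0 < et) (hex : 0 < ex) (h1 : K * (L * es * et) ≤ E1 * ex) (h2 : 0 ≤ E2)
    (htg : t' ≤ g) (hhB : B ≤ h) :
      (t^(k+1-1)*t'^(2*k-1)*et) * (K*L*B^k * (s^(k+1-1)*s'^(k-1)*es)) ≤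
    (s*g*E1 + s'*t'*E2)*(h*t)*ex*(s'*g*s*t'*h*t)^(k-1) := by
  rw [aux_prod _ hs' hg hs ht' hh ht, add_sub_cancel_right]
  have hg2 : t'^k ≤ g^k := by gcongr
  have hh2 : B^k ≤ h^k := by gcongr
  calc _ = (t^k*(t'^k*t'^(k-1))*et) * (K*L*B^k * (s^k*s'^(k-1)*es)) := by
        rw [← Real.rpow_add ht', show 2*k-1 = k+(k-1) by ring]
    _ ≤ (t^k*(g^k*t'^(k-1))*et) * (K*L*h^k * (s^k*s'^(k-1)*es)) := by gcongr
    _ = (s*g*(K * (L * es * et)) + 0)*((h*t)*(s'^(k-1)*g^(k-1)*s^(k-1)*t'^(k-1)*h^(k-1)*t^(k-1))) := by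
        rw [aux_pk k ht, aux_pk k hg, aux_pk k hh, aux_pk k hs]; ring
    _ ≤ (s*g*(E1*ex) + s'*t'*(E2*ex))*((h*t)*(s'^(k-1)*g^(k-1)*s^(k-1)*t'^(k-1)*h^(k-1)*t^(k-1))) := by
        gcongr; positivity
    _ = _ := by ring

lemma aux_PQ (p : ℝ) (hp : 0 < p) : ∃ D : ℝ, 0 < D ∧ ∀ b t v B : ℝ, 0 ≤ b → 0 ≤ t → 0 ≤ v → 0 ≤ B →
    B ≤ v + t → (1+b*v)^(-p) * Real.exp (-(b*t/2)) ≤ D * (1+b*B)^(-p) := by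
  obtain ⟨D, hD, H⟩ := aux_expb p hp
  refine ⟨D, hD, fun b t v B hb ht hv hB h => ?_⟩
  have h1 := H (b*t) (by positivity)
  have hbt : 0 ≤ b*t := by positivity
  have hbv : 0 ≤ b*v := by positivity
  have h2 : ((1+b*v)*(1+b*t))^(-p) ≤ (1+b*B)^(-p) := by
    apply Real.rpow_le_rpow_of_nonpos (by positivity) _ (by linarith)
    nlinarith [mul_nonneg hbt hbv, mul_le_mul_of_nonneg_left h hb]
  rw [Real.mul_rpow (by positivity) (by positivity)] at h2
  calc _ ≤ (1+b*v)^(-p) * (D * (1+b*t)^(-p)) := by gcongr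
    _ = D * ((1+b*v)^(-p) * (1+b*t)^(-p)) := by ring
    _ ≤ _ := by gcongr

set_option maxHeartbeats 2000000 in
lemma aux_main (k : ℝ) (hk : 0 < k) :
    ∃ c C : ℝ, 0 < c ∧ 0 < C ∧ ∀ l1 l2 l3 x1 x2 x3 : ℝ,
      l2 < l1 → l3 < l2 → x1 ≤ x3 → x2 ≤ x1 → x1 + x2 + x3 = 0 → l1 + l2 + l3 = 0 →
      l1 - l2 ≤ l2 - l3 →
      (l1 - l2) * (x3 - x1) ≤ (l2 - l3) * (x1 - x2) →
      ∀ T, T = (l1-l2)^(2*k) * ((l2-l3)^(2*k) * (l2-l3)^(2*k)) * (Real.exp (l1 * x3 + l2 * x1 + l3 * x2) *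
          ((1 + (l1 - l2) * (x3 - x1)) ^ (-(k + 1)) * (1 + (l2 - l3) * (x1 - x2)) ^ (-k)
            * (1 + (l1 - l3) * (x3 - x2)) ^ (-(k + 1)))) →
      ∀ I, I = (∫ n2 in l3..l2, ∫ n1 in l2..l1,
      ((n1 - l2) * (l1 - n2) * Erk1 k ((x1 - x2) / 2) (n1 - n2)
        + (l1 - n1) * (l2 - n2) * Erk1 k (-(x1 - x2) / 2) (n1 - n2))
      * ((n1 - l3) * (n2 - l3)) * Real.exp ((x1 + x2 - 2 * x3) * (n1 + n2) / 2)
      * Wk k l1 l2 l3 n1 n2) →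
      c * T ≤ I ∧ I ≤ C * T := by
  obtain ⟨c0, C0, hc0, hC0, HE⟩ := aux_Erk k hk
  obtain ⟨D1, hD1, HD1⟩ := aux_PQ k hk
  obtain ⟨D2, hD2, HD2⟩ := aux_PQ (k+1) (by linarith)
  obtain ⟨c1, C1, hc1, hC1, J1⟩ := aux_J (k+1) k (by linarith) hk
  obtain ⟨c2, C2, hc2, hC2, J2⟩ := aux_J k (k+1) hk (by linarith)
  obtain ⟨c3, C3, hc3, hC3, J3⟩ := aux_J (k+1) (2*k) (by linarith) (by linarith)
  refine ⟨c0 * 2^(-k) * c1 * c3, C0*(D1+D2) * (2^(2*k)) * (C1 * 4^(k+1)) * (C1 + C2),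
    by positivity, by positivity, ?_⟩
  intro l1 l2 l3 x1 x2 x3 hA hB ha hb hx hl hAB hab T hT I hI
  set A := l1 - l2 with hAdef
  set B := l2 - l3 with hBdef
  set a := x3 - x1 with hadef
  set b := x1 - x2 with hbdef
  have hA0 : 0 < A := by linarith
  have hB0 : 0 < B := by linarith
  have ha0 : 0 ≤ a := by linarith
  have hb0 : 0 ≤ b := by linarith
  set L := Real.exp (l1 * x3 + l2 * x1 + l3 * x2) with hL
  have hL0 : 0 < L := Real.exp_pos _
  set Q := 1 + B*b with hQ
  set S := 1 + A*a with hS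
  set R := 1 + (l1-l3)*(x3-x2) with hR
  have hQ0 : 0 < Q := by positivity
  have hS0 : 0 < S := by positivity
  have hRe : R = 1 + (A+B)*(a+b) := by rw [hR, hAdef, hBdef, hadef, hbdef]; ring
  have hR0 : 0 < R := by rw [hRe]; positivity
  obtain ⟨i1, jl1, ju1⟩ := J1 l3 l2 ((a+b)/2) hB (by positivity)
  obtain ⟨i3, jl3, ju3⟩ := J3 l3 l2 (a+b) hB (by positivity)
  obtain ⟨i1', jl1', ju1'⟩ := J1 l2 l1 a hA ha0
  obtain ⟨i2, jl2, ju2⟩ := J2 l2 l1 a hA ha0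
  have hmeas : Measurable (Function.uncurry (fun n2 n1 => ((n1 - l2) * (l1 - n2) * Erk1 k (b / 2) (n1 - n2)
        + (l1 - n1) * (l2 - n2) * Erk1 k (-b / 2) (n1 - n2))
      * ((n1 - l3) * (n2 - l3)) * Real.exp ((x1 + x2 - 2 * x3) * (n1 + n2) / 2)
      * Wk k l1 l2 l3 n1 n2)) := by
    have m1 := aux_measErk k (b/2)
    have m2 := aux_measErk k (-b/2)
    unfold Function.uncurry Wk
    have m1' : Measurable (fun p : ℝ × ℝ => Erk1 k (b/2) (p.2 - p.1)) := m1.comp (by fun_prop)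
    have m2' : Measurable (fun p : ℝ × ℝ => Erk1 k (-b/2) (p.2 - p.1)) := m2.comp (by fun_prop)
    fun_prop
  have key := aux_dbl hB.le hA.le _ hmeas _ _ _ _ i3 i1
    (i1'.const_mul (c0 * 2^(-k) * Q^(-k) * L * B^k))
    (((i1'.const_mul (Q^(-k))).add (i2.const_mul (Q^(-(k+1))))).const_mul
      (C0*(D1+D2)*L*((2*B)^k*(2*B)^k))) (by
    intro n2 hn2 n1 hn1
    obtain ⟨p1, p2⟩ := hn2
    obtain ⟨p3, p4⟩ := hn1
    have hs : 0 < n1 - l2 := by linarith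
    have hs' : 0 < l1 - n1 := by linarith
    have ht : 0 < n2 - l3 := by linarith
    have ht' : 0 < l2 - n2 := by linarith
    have hg : 0 < l1 - n2 := by linarith
    have hh : 0 < n1 - l3 := by linarith
    have hv : 0 < n1 - n2 := by linarith
    obtain ⟨e1, e2, e3, e4⟩ := HE (b/2) (n1-n2) (by positivity)
    have h2 : 2*(b/2*(n1-n2)) = b*(n1-n2) := by ring
    rw [h2] at e1 e2 e4
    rw [← neg_div] at e3 e4
    have hexp : Real.exp (b/2*(n1-n2)) * Real.exp ((x1 + x2 - 2 * x3) * (n1 + n2) / 2) =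
        L * Real.exp (-a*(n1-l2)) * Real.exp (-(a+b)*(n2-l3)) := by
      rw [hL, ← Real.exp_add, ← Real.exp_add, ← Real.exp_add]
      congr 1
      rw [hadef, hbdef]
      have : x3 = -x1-x2 := by linarith
      have : l1 = -l2-l3 := by linarith
      subst_vars
      ring
    have hexp2 : Real.exp (-(a+b)*(n2-l3)) ≤ Real.exp (-(b*(n2-l3)/2)) * Real.exp (-((a+b)/2)*(n2-l3)) := by
      rw [← Real.exp_add]; apply Real.exp_le_exp.2; linarith [mul_nonneg ha0 ht.le, show -(b*(n2-l3)/2) + -((a+b)/2)*(n2-l3) - -(a+b)*(n2-l3) = a*(n2-l3)/2 by ring]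
    have up : ∀ p D E : ℝ, 0 < D → D ≤ D1 + D2 →
        (1+b*(n1-n2))^(-p) * Real.exp (-(b*(n2-l3)/2)) ≤ D * (1+b*B)^(-p) →
        E ≤ C0 * (Real.exp (b/2*(n1-n2)) * (1+b*(n1-n2))^(-p)) →
        E * Real.exp ((x1 + x2 - 2 * x3) * (n1 + n2) / 2) ≤
          C0*(D1+D2)*Q^(-p)*(L * Real.exp (-a*(n1-l2)) * Real.exp (-((a+b)/2)*(n2-l3))) := by
      intro p D E hD hDD hpq hE
      have hP : 0 < 1+b*(n1-n2) := by positivity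
      rw [mul_comm b B] at hpq
      calc _ ≤ C0 * (Real.exp (b/2*(n1-n2)) * (1+b*(n1-n2))^(-p)) * Real.exp ((x1 + x2 - 2 * x3) * (n1 + n2) / 2) := by gcongr
        _ = C0 * (1+b*(n1-n2))^(-p) * (Real.exp (b/2*(n1-n2)) * Real.exp ((x1 + x2 - 2 * x3) * (n1 + n2) / 2)) := by ring
        _ = C0 * (1+b*(n1-n2))^(-p) * (L * Real.exp (-a*(n1-l2)) * Real.exp (-(a+b)*(n2-l3))) := by rw [hexp]
        _ ≤ C0 * (1+b*(n1-n2))^(-p) * (L * Real.exp (-a*(n1-l2)) * (Real.exp (-(b*(n2-l3)/2)) * Real.exp (-((a+b)/2)*(n2-l3)))) := by gcongr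
        _ = C0 * ((1+b*(n1-n2))^(-p) * Real.exp (-(b*(n2-l3)/2))) * (L * Real.exp (-a*(n1-l2)) * Real.exp (-((a+b)/2)*(n2-l3))) := by ring
        _ ≤ C0 * (D * Q^(-p)) * (L * Real.exp (-a*(n1-l2)) * Real.exp (-((a+b)/2)*(n2-l3))) := by gcongr
        _ ≤ C0 * ((D1+D2) * Q^(-p)) * (L * Real.exp (-a*(n1-l2)) * Real.exp (-((a+b)/2)*(n2-l3))) := by gcongr
        _ = _ := by ring
    have u1 := up k D1 _ hD1 (by linarith)
      (HD1 b (n2-l3) (n1-n2) B hb0 ht.le hv.le hB0.le (by linarith)) e2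
    have u2 := up (k+1) D2 _ hD2 (by linarith)
      (HD2 b (n2-l3) (n1-n2) B hb0 ht.le hv.le hB0.le (by linarith)) e4
    have lo : c0 * 2^(-k) * Q^(-k) * (L * Real.exp (-a*(n1-l2)) * Real.exp (-(a+b)*(n2-l3))) ≤
        Erk1 k (b/2) (n1-n2) * Real.exp ((x1 + x2 - 2 * x3) * (n1 + n2) / 2) := by
      have hP : (2*Q)^(-k) ≤ (1+b*(n1-n2))^(-k) := by
        apply Real.rpow_le_rpow_of_nonpos (by positivity) _ (by linarith)
        rw [hQ]
        have : b*(n1-n2) ≤ b*(2*B) := by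
          apply mul_le_mul_of_nonneg_left _ hb0
          linarith
        linarith
      rw [Real.mul_rpow (by norm_num) hQ0.le] at hP
      rw [← hexp]
      calc _ = c0 * (Real.exp (b/2*(n1-n2)) * (2^(-k) * Q^(-k))) * Real.exp ((x1 + x2 - 2 * x3) * (n1 + n2) / 2) := by ring
        _ ≤ c0 * (Real.exp (b/2*(n1-n2)) * (1+b*(n1-n2))^(-k)) * Real.exp ((x1 + x2 - 2 * x3) * (n1 + n2) / 2) := by gcongr
        _ ≤ _ := by gcongr
    refine ⟨by positivity, ?_, ?_⟩
    · exact aux_lo hk hs hs' ht ht' hg hh hB0 (by positivity) hL0 (Real.exp_pos _) (Real.exp_pos _)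
        (Real.exp_pos _) lo e3 (by linarith) (by linarith)
    · exact aux_up hk hs hs' ht ht' hg hh (by positivity) (by positivity) hL0 (Real.exp_pos _)
        (by positivity) (Real.exp_pos _) u1 u2 (by linarith) (by linarith) (by linarith))
  rw [← hI] at key
  obtain ⟨k1, k2⟩ := key
  rw [intervalIntegral.integral_const_mul] at k1 k2
  rw [intervalIntegral.integral_add (i1'.const_mul _) (i2.const_mul _),
    intervalIntegral.integral_const_mul, intervalIntegral.integral_const_mul] at k2
  rw [← hAdef] at jl1' ju1' jl2 ju2
  rw [← hBdef] at jl1 ju1 jl3 ju3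
  rw [show k+1+k-1 = 2*k by ring] at jl1 ju1 jl1' ju1'
  rw [show k+(k+1)-1 = 2*k by ring] at jl2 ju2
  rw [show k+1+2*k-1 = 3*k by ring] at jl3 ju3
  rw [mul_comm a A, ← hS] at jl1' ju1' jl2 ju2
  constructor
  · refine le_trans ?_ k1
    have hRR : R^(-(k+1)) ≤ (1+(a+b)*B)^(-(k+1)) := by
      apply Real.rpow_le_rpow_of_nonpos (by positivity) _ (by linarith)
      rw [hRe]; nlinarith [mul_nonneg hA0.le (add_nonneg ha0 hb0)]
    have hBB : B^(2*k)*B^(2*k) = B^k * B^(3*k) := by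
      rw [← Real.rpow_add hB0, ← Real.rpow_add hB0]; congr 1; ring
    calc _ = c3 * (B^(3*k) * R^(-(k+1))) * (c0 * 2^(-k) * Q^(-k) * L * B^k * (c1 * (A^(2*k) * S^(-(k+1))))) := by
          rw [hT, hBB]; ring
      _ ≤ c3 * (B^(3*k) * (1+(a+b)*B)^(-(k+1))) * (c0 * 2^(-k) * Q^(-k) * L * B^k * (c1 * (A^(2*k) * S^(-(k+1))))) := by gcongr
      _ ≤ _ := by
        refine mul_le_mul jl3 (mul_le_mul_of_nonneg_left jl1' (by positivity)) (by positivity) (le_trans (by positivity) jl3)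
  · refine k2.trans ?_
    have hRR : (1+(a+b)/2*B)^(-(k+1)) ≤ 4^(k+1) * R^(-(k+1)) := by
      have : (1+(a+b)/2*B)^(-(k+1)) ≤ (4⁻¹*R)^(-(k+1)) := by
        apply Real.rpow_le_rpow_of_nonpos (by positivity) _ (by linarith)
        rw [hRe]; nlinarith [mul_nonneg (sub_nonneg.2 hAB) (add_nonneg ha0 hb0)]
      rwa [Real.mul_rpow (by norm_num) hR0.le, Real.inv_rpow (by norm_num), Real.rpow_neg (by norm_num : (0:ℝ) ≤ 4), inv_inv] at this
    have hQS : Q^(-(k+1)) * S^(-k) ≤ Q^(-k) * S^(-(k+1)) := by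
      rw [show -(k+1) = -k + (-1) by ring, Real.rpow_add hQ0, Real.rpow_add hS0, Real.rpow_neg_one, Real.rpow_neg_one]
      have : Q⁻¹ ≤ S⁻¹ := by
        apply inv_anti₀ hS0; rw [hQ, hS]; linarith
      calc _ = Q^(-k) * S^(-k) * Q⁻¹ := by ring
        _ ≤ Q^(-k) * S^(-k) * S⁻¹ := by gcongr
        _ = _ := by ring
    have h2B : (2*B)^k*(2*B)^k = 2^(2*k) * B^(2*k) := by
      rw [← Real.rpow_add (by positivity), ← two_mul, Real.mul_rpow (by norm_num) hB0.le]
    have v1 : Q^(-k) * (∫ u in l2..l1, (u-l2)^(k+1-1) * (l1-u)^(k-1) * Real.exp (-a*(u-l2))) +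
        Q^(-(k+1)) * (∫ u in l2..l1, (u-l2)^(k-1) * (l1-u)^(k+1-1) * Real.exp (-a*(u-l2))) ≤
        (C1+C2) * (A^(2*k) * (Q^(-k) * S^(-(k+1)))) := by
      calc _ ≤ Q^(-k) * (C1 * (A^(2*k) * S^(-(k+1)))) + Q^(-(k+1)) * (C2 * (A^(2*k) * S^(-k))) := by gcongr
        _ = C1 * (A^(2*k) * (Q^(-k) * S^(-(k+1)))) + C2 * (A^(2*k) * (Q^(-(k+1)) * S^(-k))) := by ring
        _ ≤ C1 * (A^(2*k) * (Q^(-k) * S^(-(k+1)))) + C2 * (A^(2*k) * (Q^(-k) * S^(-(k+1)))) := by gcongr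
        _ = _ := by ring
    have v2 := ju1.trans (mul_le_mul_of_nonneg_left (mul_le_mul_of_nonneg_left hRR (by positivity : 0 ≤ B^(2*k))) hC1.le)
    rw [h2B]
    have v0 : 0 ≤ Q^(-k) * (∫ u in l2..l1, (u-l2)^(k+1-1) * (l1-u)^(k-1) * Real.exp (-a*(u-l2))) +
        Q^(-(k+1)) * (∫ u in l2..l1, (u-l2)^(k-1) * (l1-u)^(k+1-1) * Real.exp (-a*(u-l2))) := by
      have w1 := le_trans (by positivity) jl1'
      have w2 := le_trans (by positivity) jl2
      positivity
    calc _ ≤ (C1 * (B^(2*k) * (4^(k+1) * R^(-(k+1))))) * (C0*(D1+D2)*L*(2^(2*k) * B^(2*k)) *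
          ((C1+C2) * (A^(2*k) * (Q^(-k) * S^(-(k+1)))))) := by
          refine mul_le_mul v2 (mul_le_mul_of_nonneg_left v1 (by positivity)) (mul_nonneg (by positivity) v0) (by positivity)
      _ = _ := by rw [hT]; ring

/-- Theorem 4.1: sharp estimate of the `A₂` Dunkl kernel. -/
theorem estimate_C312_case3 (k : ℝ) (hk : 0 < k) :
    ∃ C : ℝ, 0 < C ∧ ∀ l1 l2 l3 x1 x2 x3 : ℝ,
      l1 + l2 + l3 = 0 →
      l2 < l1 →
      l3 < l2 →
      x1 + x2 + x3 = 0 →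
      x1 ≤ x3 →
      x2 ≤ x1 →
      l1 - l2 ≤ l2 - l3 →
      (l1 - l2) * (x3 - x1) ≤ (l2 - l3) * (x1 - x2) →
      (C⁻¹ * (Real.exp (l1 * x3 + l2 * x1 + l3 * x2) /
          ((1 + (l1 - l2) * (x3 - x1)) ^ (k + 1) * (1 + (l2 - l3) * (x1 - x2)) ^ k
            * (1 + (l1 - l3) * (x3 - x2)) ^ (k + 1)))
        ≤ EkA2 k x1 x2 x3 l1 l2 l3 ∧
      EkA2 k x1 x2 x3 l1 l2 l3
        ≤ C * (Real.exp (l1 * x3 + l2 * x1 + l3 * x2) /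
          ((1 + (l1 - l2) * (x3 - x1)) ^ (k + 1) * (1 + (l2 - l3) * (x1 - x2)) ^ k
            * (1 + (l1 - l3) * (x3 - x2)) ^ (k + 1)))) := by
  obtain ⟨c, C, hc, hC, H⟩ := aux_main k hk
  set G := 3 * Real.Gamma (3 * k) / Real.Gamma k ^ 2 with hG
  have hG0 : 0 < G := by
    have := Real.Gamma_pos_of_pos hk
    have := Real.Gamma_pos_of_pos (show 0 < 3 * k by linarith)
    positivity
  refine ⟨G * C + (G * c * 2^(-(2*k)))⁻¹, by positivity, ?_⟩
  intro l1 l2 l3 x1 x2 x3 hl hA hB hx ha hb hAB hab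
  obtain ⟨h1, h2⟩ := H l1 l2 l3 x1 x2 x3 hA hB ha hb hx hl hAB hab _ rfl _ rfl
  rw [EkA2]
  set I := ∫ n2 in l3..l2, ∫ n1 in l2..l1,
      ((n1 - l2) * (l1 - n2) * Erk1 k ((x1 - x2) / 2) (n1 - n2)
        + (l1 - n1) * (l2 - n2) * Erk1 k (-(x1 - x2) / 2) (n1 - n2))
      * ((n1 - l3) * (n2 - l3)) * Real.exp ((x1 + x2 - 2 * x3) * (n1 + n2) / 2)
      * Wk k l1 l2 l3 n1 n2 with hI
  have hA0 : 0 < l1 - l2 := by linarith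
  have hB0 : 0 < l2 - l3 := by linarith
  have hG0' : 0 < l1 - l3 := by linarith
  have ha0 : 0 ≤ x3 - x1 := by linarith
  have hb0 : 0 ≤ x1 - x2 := by linarith
  have hg0 : 0 ≤ x3 - x2 := by linarith
  set U := Real.exp (l1 * x3 + l2 * x1 + l3 * x2) *
          ((1 + (l1 - l2) * (x3 - x1)) ^ (-(k + 1)) * (1 + (l2 - l3) * (x1 - x2)) ^ (-k)
            * (1 + (l1 - l3) * (x3 - x2)) ^ (-(k + 1))) with hU
  have hU0 : 0 < U := by positivity
  have hUe : Real.exp (l1 * x3 + l2 * x1 + l3 * x2) /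
          ((1 + (l1 - l2) * (x3 - x1)) ^ (k + 1) * (1 + (l2 - l3) * (x1 - x2)) ^ k
            * (1 + (l1 - l3) * (x3 - x2)) ^ (k + 1)) = U := by
    rw [hU, Real.rpow_neg (by positivity), Real.rpow_neg (by positivity), Real.rpow_neg (by positivity)]
    rw [div_eq_mul_inv, mul_inv, mul_inv]
  rw [hUe]
  have hV : Vlam l1 l2 l3 ^ (2*k) = (l1-l2)^(2*k) * ((l1-l3)^(2*k) * (l2-l3)^(2*k)) := by
    rw [Vlam, Real.mul_rpow (by positivity) hB0.le, Real.mul_rpow hA0.le hG0'.le, mul_assoc]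
  set a2 := (l1-l2)^(2*k) with ha2
  set b2 := (l2-l3)^(2*k) with hb2
  set g2 := (l1-l3)^(2*k) with hg2
  have ha20 : 0 < a2 := by positivity
  have hb20 : 0 < b2 := by positivity
  have hg20 : 0 < g2 := by positivity
  have q1 : b2 ≤ g2 := Real.rpow_le_rpow hB0.le (by linarith) (by linarith)
  have q2 : g2 ≤ 2^(2*k) * b2 := by
    rw [hb2, ← Real.mul_rpow (by norm_num) hB0.le]
    exact Real.rpow_le_rpow hG0'.le (by linarith) (by linarith)
  rw [hV]
  have e0 : 3 * Real.Gamma (3 * k) / (a2 * (g2 * b2) * Real.Gamma k ^ 2) * I = G * I / (a2 * (g2 * b2)) := by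
    rw [hG]
    have := (Real.Gamma_pos_of_pos hk).ne'
    field_simp
  rw [e0]
  have h2k : (0:ℝ) < 2^(2*k) := by positivity
  constructor
  · have s1 : (G * C + (G * c * 2^(-(2*k)))⁻¹)⁻¹ ≤ G * c * 2^(-(2*k)) := by
      apply inv_le_of_inv_le₀ (by positivity)
      have : 0 < G * C := by positivity
      linarith
    refine (mul_le_mul_of_nonneg_right s1 hU0.le).trans ?_
    rw [le_div_iff₀ (by positivity), Real.rpow_neg (by norm_num)]
    calc G * c * (2^(2*k))⁻¹ * U * (a2 * (g2 * b2))
        ≤ G * c * (2^(2*k))⁻¹ * U * (a2 * ((2^(2*k) * b2) * b2)) := by gcongr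
      _ = G * (c * (a2 * (b2 * b2) * U)) := by field_simp
      _ ≤ G * I := by gcongr
  · have s1 : G * C ≤ G * C + (G * c * 2^(-(2*k)))⁻¹ := by
      have : 0 < (G * c * 2^(-(2*k)))⁻¹ := by positivity
      linarith
    refine le_trans ?_ (mul_le_mul_of_nonneg_right s1 hU0.le)
    rw [div_le_iff₀ (by positivity)]
    calc G * I ≤ G * (C * (a2 * (b2 * b2) * U)) := by gcongr
      _ = G * C * U * (a2 * (b2 * b2)) := by ring
      _ ≤ G * C * U * (a2 * (g2 * b2)) := by gcongr
end

section
/- (Lemma 5.2, formula (beta+).) Uniformly over all λ ∈ C⁺ and all X ∈ a with x2 ≥ x3, one has V(λ)^{2k}·E_k(X,λ) ≍ ∫_{λ3}^{λ2} ∫_{λ2}^{λ1} [(ν1−ν2)(β_λ + β_X(ν1−λ3)(λ2−ν2)) / (1+β_X(ν1−ν2))^{k+1}] (λ1−ν1)(λ1−ν2) e^{(x2−x1)ν1 + (x3−x1)ν2} W_k(λ,ν) dν1 dν2. -/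
open Real MeasureTheory

/-! ### weighted measures -/

def wA (a b p q x : ℝ) : ℝ := (b - x) * (x - a) * (p + q * x)

noncomputable def wm (k a b p q : ℝ) : Measure ℝ :=
  (volume.restrict (Set.Ioc a b)).withDensity (fun x => ENNReal.ofReal (wA a b p q x ^ (k - 1)))

lemma wA_cont (a b p q : ℝ) : Continuous (wA a b p q) := by
  unfold wA; fun_prop

lemma wA_nonneg {a b p q x : ℝ} (hp : ∀ x ∈ Set.Icc a b, 0 < p + q * x) (hx : x ∈ Set.Icc a b) :
    0 ≤ wA a b p q x := by
  unfold wA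
  exact mul_nonneg (mul_nonneg (by linarith [hx.2]) (by linarith [hx.1])) (hp x hx).le

lemma wA_int {k a b p q : ℝ} (hk : 0 < k) (hab : a < b)
    (hp : ∀ x ∈ Set.Icc a b, 0 < p + q * x) :
    IntervalIntegrable (fun x => wA a b p q x ^ (k - 1)) volume a b := by
  have h1 : IntervalIntegrable (fun x : ℝ => (x - a) ^ (k - 1)) volume a b := by
    have := (intervalIntegral.intervalIntegrable_rpow' (a := 0) (b := b - a)
      (r := k - 1) (by linarith)).comp_sub_right a
    simpa using this
  have h2 : IntervalIntegrable (fun x : ℝ => (b - x) ^ (k - 1)) volume a b := by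
    have := (intervalIntegral.intervalIntegrable_rpow' (a := b - a) (b := 0)
      (r := k - 1) (by linarith)).comp_sub_left b
    simpa using this
  have hm1 : a < (a + b) / 2 := by linarith
  have hm2 : (a + b) / 2 < b := by linarith
  have hS : ∀ x ∈ Set.Icc a b, (x - a) ^ (k - 1) * ((b - x) ^ (k - 1) * (p + q * x) ^ (k - 1))
      = wA a b p q x ^ (k - 1) := by
    intro x hx
    unfold wA
    rw [Real.mul_rpow (mul_nonneg (by linarith [hx.2]) (by linarith [hx.1])) (hp x hx).le,
      Real.mul_rpow (by linarith [hx.2]) (by linarith [hx.1])]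
    ring
  have hL : IntervalIntegrable (fun x => wA a b p q x ^ (k - 1)) volume a ((a + b) / 2) := by
    have h1' := h1.mono_set (c := a) (d := (a + b) / 2) (by
      rw [Set.uIcc_of_le hm1.le, Set.uIcc_of_le hab.le]
      exact Set.Icc_subset_Icc le_rfl hm2.le)
    refine IntervalIntegrable.congr ?_ (h1'.mul_continuousOn
      (g := fun x => (b - x) ^ (k - 1) * (p + q * x) ^ (k - 1)) ?_)
    · intro x hx
      rw [Set.uIoc_of_le hm1.le] at hx
      exact hS x ⟨hx.1.le, by linarith [hx.2]⟩
    · rw [Set.uIcc_of_le hm1.le]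
      refine ContinuousOn.mul (ContinuousOn.rpow_const (by fun_prop) ?_)
        (ContinuousOn.rpow_const (by fun_prop) ?_)
      · intro x hx; left; have := hx.2; linarith
      · intro x hx; left; exact (hp x ⟨hx.1, by linarith [hx.2]⟩).ne'
  have hR : IntervalIntegrable (fun x => wA a b p q x ^ (k - 1)) volume ((a + b) / 2) b := by
    have h1' := h2.mono_set (c := (a + b) / 2) (d := b) (by
      rw [Set.uIcc_of_le hm2.le, Set.uIcc_of_le hab.le]
      exact Set.Icc_subset_Icc hm1.le le_rfl)
    refine IntervalIntegrable.congr ?_ (h1'.mul_continuousOn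
      (g := fun x => (x - a) ^ (k - 1) * (p + q * x) ^ (k - 1)) ?_)
    · intro x hx
      rw [Set.uIoc_of_le hm2.le] at hx
      have := hS x ⟨by linarith [hx.1], hx.2⟩
      simp only at this ⊢
      rw [← this]; ring
    · rw [Set.uIcc_of_le hm2.le]
      refine ContinuousOn.mul (ContinuousOn.rpow_const (by fun_prop) ?_)
        (ContinuousOn.rpow_const (by fun_prop) ?_)
      · intro x hx; left; have := hx.1; linarith
      · intro x hx; left; exact (hp x ⟨by linarith [hx.1], hx.2⟩).ne'
  exact hL.trans hR

lemma wm_integral {k a b p q : ℝ} (hab : a < b)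
    (hp : ∀ x ∈ Set.Icc a b, 0 < p + q * x) (f : ℝ → ℝ) :
    ∫ x, f x ∂(wm k a b p q) = ∫ x in a..b, f x * wA a b p q x ^ (k - 1) := by
  unfold wm
  rw [integral_withDensity_eq_integral_toReal_smul, intervalIntegral.integral_of_le hab.le]
  · refine setIntegral_congr_fun measurableSet_Ioc ?_
    intro x hx
    simp only [smul_eq_mul]
    rw [ENNReal.toReal_ofReal (Real.rpow_nonneg (wA_nonneg hp ⟨hx.1.le, hx.2⟩) _)]
    ring
  · exact ENNReal.measurable_ofReal.comp ((wA_cont a b p q).measurable.pow_const _)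
  · exact Filter.Eventually.of_forall fun x => ENNReal.ofReal_lt_top

lemma wm_finite {k a b p q : ℝ} (hk : 0 < k) (hab : a < b)
    (hp : ∀ x ∈ Set.Icc a b, 0 < p + q * x) : IsFiniteMeasure (wm k a b p q) := by
  refine isFiniteMeasure_withDensity_ofReal ?_
  have := wA_int hk hab hp
  rw [intervalIntegrable_iff_integrableOn_Ioc_of_le hab.le] at this
  exact this.2

lemma wm_mem (k a b p q : ℝ) : ∀ᵐ x ∂(wm k a b p q), x ∈ Set.Icc a b := by
  refine (withDensity_absolutelyContinuous _ _).ae_le ?_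
  filter_upwards [ae_restrict_mem measurableSet_Ioc] with x hx using ⟨hx.1.le, hx.2⟩

lemma wm_ibp {k a b p q : ℝ} (hk : 0 < k) (hab : a < b)
    (hp : ∀ x ∈ Set.Icc a b, 0 < p + q * x) (g g' : ℝ → ℝ)
    (hg : ∀ x, HasDerivAt g (g' x) x) (hg' : Continuous g') :
    ∫ x, (wA a b p q x * g' x
      + k * (-(x - a) * (p + q * x) + (b - x) * (p + q * x) + (b - x) * (x - a) * q) * g x)
      ∂(wm k a b p q) = 0 := by
  have hgc : Continuous g := continuous_iff_continuousAt.2 fun x => (hg x).continuousAt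
  rw [wm_integral hab hp]
  have key := intervalIntegral.integral_eq_sub_of_hasDerivAt_of_le (a := a) (b := b)
    (f := fun x => wA a b p q x ^ k * g x)
    (f' := fun x => (wA a b p q x * g' x
      + k * (-(x - a) * (p + q * x) + (b - x) * (p + q * x) + (b - x) * (x - a) * q) * g x)
        * wA a b p q x ^ (k - 1)) hab.le ?_ ?_ ?_
  · rw [key]
    simp [wA, Real.zero_rpow hk.ne']
  · refine ContinuousOn.mul (ContinuousOn.rpow_const (wA_cont a b p q).continuousOn ?_)
      hgc.continuousOn
    intro x hx; right; exact hk.le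
  · intro x hx
    have hA : 0 < wA a b p q x := by
      unfold wA
      exact mul_pos (mul_pos (by linarith [hx.2]) (by linarith [hx.1])) (hp x ⟨hx.1.le, hx.2.le⟩)
    have hdA : HasDerivAt (wA a b p q)
        (-(x - a) * (p + q * x) + (b - x) * (p + q * x) + (b - x) * (x - a) * q) x := by
      have e1 : HasDerivAt (fun x : ℝ => b - x) (-1) x := by
        simpa using (hasDerivAt_id x).const_sub b
      have e2 : HasDerivAt (fun x : ℝ => x - a) 1 x := by
        simpa using (hasDerivAt_id x).sub_const a
      have e3 : HasDerivAt (fun x : ℝ => p + q * x) q x := by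
        simpa using ((hasDerivAt_id x).const_mul q).const_add p
      have := (e1.mul e2).mul e3
      refine (this.congr_deriv ?_)
      simp only [Pi.mul_apply]
      ring
    have := (hdA.rpow_const (p := k) (Or.inl hA.ne')).mul (hg x)
    refine this.congr_deriv ?_
    have : wA a b p q x ^ k = wA a b p q x * wA a b p q x ^ (k - 1) := by
      rw [← Real.rpow_one_add' hA.le (by simpa using hk.ne')]; simp
    rw [this]; ring
  · refine (wA_int hk hab hp).continuousOn_mul ?_
    have := wA_cont a b p q
    fun_prop

/-! ### integrals against finite compactly supported measures -/

lemma int_of_cont {α : Type*} [TopologicalSpace α] [MeasurableSpace α] [OpensMeasurableSpace α]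
    [T2Space α] {m : Measure α} [IsFiniteMeasure m] {K : Set α} (hK : IsCompact K)
    (hm : ∀ᵐ x ∂m, x ∈ K) {f : α → ℝ} (hf : ContinuousOn f K) : Integrable f m := by
  have := hf.integrableOn_compact (μ := m) hK
  unfold IntegrableOn at this
  rwa [Measure.restrict_eq_self_of_ae_mem hm] at this

lemma deriv_int {α : Type*} [TopologicalSpace α] [MeasurableSpace α] [OpensMeasurableSpace α]
    [T2Space α] {m : Measure α} [IsFiniteMeasure m] {K : Set α} (hK : IsCompact K)
    (hm : ∀ᵐ x ∂m, x ∈ K) {f f' : ℝ → α → ℝ} (hf : ∀ t, Continuous (f t))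
    (hf' : Continuous (fun q : ℝ × α => f' q.1 q.2))
    (hd : ∀ t x, HasDerivAt (fun t => f t x) (f' t x) t) (t : ℝ) :
    HasDerivAt (fun t => ∫ x, f t x ∂m) (∫ x, f' t x ∂m) t := by
  obtain ⟨C, hC⟩ := ((isCompact_closedBall t 1).prod hK).exists_bound_of_continuousOn
    hf'.continuousOn
  have hft : ∀ t, Integrable (f t) m := fun t => int_of_cont hK hm (hf t).continuousOn
  have hft' : ∀ t, Integrable (f' t) m := fun t =>
    int_of_cont hK hm (Continuous.continuousOn (hf'.comp (by fun_prop : Continuous fun x => (t, x))))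
  refine (hasDerivAt_integral_of_dominated_loc_of_deriv_le (bound := fun _ => C)
    (Metric.closedBall_mem_nhds t one_pos) (Filter.Eventually.of_forall fun s => (hft s).1)
    (hft t) (hft' t).1 ?_ (integrable_const C) ?_).2
  · filter_upwards [hm] with x hx s hs using hC (s, x) ⟨hs, hx⟩
  · exact Filter.Eventually.of_forall fun x s _ => hd s x

/-! ### the rank one function -/

lemma zpos : ∀ x ∈ Set.Icc (-1 : ℝ) 1, 0 < (1 : ℝ) + 0 * x := by
  intro x _; norm_num

noncomputable def ee (k t : ℝ) : ℝ := ∫ z, Real.exp (z * t) * (1 + z) ∂(wm k (-1) 1 1 0)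
noncomputable def de (k t : ℝ) : ℝ :=
  ∫ z, Real.exp (z * t) * z * (1 + z) ∂(wm k (-1) 1 1 0)
noncomputable def dl (k t : ℝ) : ℝ :=
  ∫ z, Real.exp (z * t) * ((1 - z) * (1 + z)) ∂(wm k (-1) 1 1 0)

lemma zint {k : ℝ} (hk : 0 < k) {f : ℝ → ℝ} (hf : Continuous f) :
    Integrable f (wm k (-1) 1 1 0) := by
  have := wm_finite hk (by norm_num) zpos
  exact int_of_cont isCompact_Icc (wm_mem k (-1) 1 1 0) hf.continuousOn

lemma zneg (k : ℝ) (f : ℝ → ℝ) :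
    ∫ z, f (-z) ∂(wm k (-1) 1 1 0) = ∫ z, f z ∂(wm k (-1) 1 1 0) := by
  rw [wm_integral (by norm_num) zpos, wm_integral (by norm_num) zpos]
  have := intervalIntegral.integral_comp_neg (a := -1) (b := 1)
    (fun z => f z * wA (-1) 1 1 0 z ^ (k - 1))
  simp only [neg_neg] at this
  rw [← this]
  congr 1; ext z
  congr 2
  unfold wA; ring

lemma ee_hasDeriv {k : ℝ} (hk : 0 < k) (t : ℝ) : HasDerivAt (ee k) (de k t) t := by
  have := wm_finite hk (by norm_num) zpos
  refine deriv_int (f := fun t z => Real.exp (z * t) * (1 + z))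
    (f' := fun t z => Real.exp (z * t) * z * (1 + z)) isCompact_Icc (wm_mem k (-1) 1 1 0)
    (by intro t; fun_prop) (by fun_prop) ?_ t
  intro t z
  have := (((hasDerivAt_id t).const_mul z).exp).mul_const (1 + z)
  simpa using this

lemma de_hasDeriv {k : ℝ} (hk : 0 < k) (t : ℝ) : ∃ y, HasDerivAt (de k) y t := by
  have := wm_finite hk (by norm_num) zpos
  refine ⟨_, deriv_int (f := fun t z => Real.exp (z * t) * z * (1 + z))
    (f' := fun t z => Real.exp (z * t) * z * z * (1 + z)) isCompact_Icc (wm_mem k (-1) 1 1 0)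
    (by intro t; fun_prop) (by fun_prop) ?_ t⟩
  intro t z
  have := ((((hasDerivAt_id t).const_mul z).exp).mul_const z).mul_const (1 + z)
  simpa using this

lemma ee_cont {k : ℝ} (hk : 0 < k) : Continuous (ee k) :=
  continuous_iff_continuousAt.2 fun x => (ee_hasDeriv hk x).continuousAt
lemma de_cont {k : ℝ} (hk : 0 < k) : Continuous (de k) :=
  continuous_iff_continuousAt.2 fun x => (de_hasDeriv hk x).choose_spec.continuousAt

lemma de_eq {k : ℝ} (hk : 0 < k) (t : ℝ) : de k t = ee k t - dl k t := by
  unfold de ee dl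
  rw [← integral_sub (zint hk (by fun_prop)) (zint hk (by fun_prop))]
  congr 1; ext z; ring

lemma dl_even (k t : ℝ) : dl k (-t) = dl k t := by
  unfold dl
  rw [← zneg]
  congr 1; ext z; ring_nf

lemma ee_neg (k t : ℝ) :
    ee k (-t) = ∫ z, Real.exp (z * t) * (1 - z) ∂(wm k (-1) 1 1 0) := by
  unfold ee
  rw [← zneg]
  congr 1; ext z; ring_nf

lemma dl_eq {k : ℝ} (hk : 0 < k) (t : ℝ) : t * dl k t = k * (ee k t - ee k (-t)) := by
  have h := wm_ibp hk (by norm_num : (-1 : ℝ) < 1) zpos (fun z => Real.exp (z * t))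
    (fun z => Real.exp (z * t) * t) (by
      intro z
      have := ((hasDerivAt_id z).mul_const t).exp
      simpa using this) (by fun_prop)
  rw [ee_neg]
  unfold dl ee
  rw [← integral_sub (zint hk (by fun_prop)) (zint hk (by fun_prop)), ← integral_const_mul,
    ← integral_const_mul, ← sub_eq_zero,
    ← integral_sub (zint hk (by fun_prop)) (zint hk (by fun_prop))]
  refine Eq.trans ?_ h
  congr 1; ext z; unfold wA; ring

lemma Erk1_eq {k : ℝ} (x v : ℝ) : Erk1 k x v =
    (Real.Gamma (k + 1/2) / (Real.sqrt Real.pi * Real.Gamma k)) * ee k (x * v) := by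
  unfold Erk1 ee
  rw [wm_integral (by norm_num) zpos]
  congr 1
  rw [intervalIntegral.integral_of_le (by norm_num), intervalIntegral.integral_of_le (by norm_num)]
  refine setIntegral_congr_fun measurableSet_Ioc ?_
  intro z hz
  have h1 : 0 < 1 + z := by linarith [hz.1]
  simp only [wA]
  rw [show (1 - z) * (z - -1) * (1 + 0 * z) = (1 - z) * (1 + z) by ring,
    Real.mul_rpow (by linarith [hz.2]) h1.le]
  have : (1 + z) ^ k = (1 + z) ^ (k - 1) * (1 + z) := by
    rw [Real.rpow_sub_one h1.ne']; field_simp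
  rw [this, mul_assoc z x v]; ring

/-! ### the double integrals -/

noncomputable def m1 (k l1 l2 l3 : ℝ) : Measure ℝ := wm k l2 l1 (-l3) 1
noncomputable def m2 (k l1 l2 l3 : ℝ) : Measure ℝ := wm k l3 l2 l1 (-1)
noncomputable def mm (k l1 l2 l3 : ℝ) : Measure (ℝ × ℝ) := (m1 k l1 l2 l3).prod (m2 k l1 l2 l3)

lemma m1pos {l1 l2 l3 : ℝ} (h23 : l3 < l2) :
    ∀ x ∈ Set.Icc l2 l1, 0 < -l3 + 1 * x := by
  intro x hx; linarith [hx.1]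
lemma m2pos {l1 l2 l3 : ℝ} (h12 : l2 < l1) :
    ∀ x ∈ Set.Icc l3 l2, 0 < l1 + (-1) * x := by
  intro x hx; linarith [hx.2]

lemma m1_fin {k l1 l2 l3 : ℝ} (hk : 0 < k) (h12 : l2 < l1) (h23 : l3 < l2) :
    IsFiniteMeasure (m1 k l1 l2 l3) := wm_finite hk h12 (m1pos h23)
lemma m2_fin {k l1 l2 l3 : ℝ} (hk : 0 < k) (h12 : l2 < l1) (h23 : l3 < l2) :
    IsFiniteMeasure (m2 k l1 l2 l3) := wm_finite hk h23 (m2pos h12)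

lemma mm_mem {k l1 l2 l3 : ℝ} (hk : 0 < k) (h12 : l2 < l1) (h23 : l3 < l2) :
    ∀ᵐ w ∂(mm k l1 l2 l3), w ∈ Set.Icc l2 l1 ×ˢ Set.Icc l3 l2 := by
  have := m1_fin hk h12 h23
  have := m2_fin hk h12 h23
  unfold mm
  have h1 : ∀ᵐ w ∂((m1 k l1 l2 l3).prod (m2 k l1 l2 l3)), w.1 ∈ Set.Icc l2 l1 :=
    Measure.quasiMeasurePreserving_fst.ae (wm_mem k l2 l1 (-l3) 1)
  have h2 : ∀ᵐ w ∂((m1 k l1 l2 l3).prod (m2 k l1 l2 l3)), w.2 ∈ Set.Icc l3 l2 :=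
    Measure.quasiMeasurePreserving_snd.ae (wm_mem k l3 l2 l1 (-1))
  filter_upwards [h1, h2] with w hw1 hw2 using ⟨hw1, hw2⟩

lemma mm_int {k l1 l2 l3 : ℝ} (hk : 0 < k) (h12 : l2 < l1) (h23 : l3 < l2) {f : ℝ × ℝ → ℝ}
    (hf : ContinuousOn f (Set.Icc l2 l1 ×ˢ Set.Icc l3 l2)) : Integrable f (mm k l1 l2 l3) := by
  have := m1_fin hk h12 h23
  have := m2_fin hk h12 h23
  have : IsFiniteMeasure (mm k l1 l2 l3) := by unfold mm; infer_instance
  exact int_of_cont (isCompact_Icc.prod isCompact_Icc) (mm_mem hk h12 h23) hf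

/-- `mm` integrals as iterated interval integrals. -/
lemma mm_eq {k l1 l2 l3 : ℝ} (hk : 0 < k) (h12 : l2 < l1) (h23 : l3 < l2) {f : ℝ → ℝ → ℝ}
    (hf : ContinuousOn (fun w : ℝ × ℝ => f w.1 w.2) (Set.Icc l2 l1 ×ˢ Set.Icc l3 l2)) :
    ∫ w, f w.1 w.2 ∂(mm k l1 l2 l3)
      = ∫ n2 in l3..l2, ∫ n1 in l2..l1, f n1 n2 * Wk k l1 l2 l3 n1 n2 := by
  have := m1_fin hk h12 h23
  have := m2_fin hk h12 h23
  have hi := mm_int hk h12 h23 hf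
  unfold mm at hi ⊢
  rw [integral_prod_symm _ hi]
  simp only [m1, m2]
  rw [wm_integral h23 (m2pos h12)]
  rw [intervalIntegral.integral_of_le h23.le, intervalIntegral.integral_of_le h23.le]
  refine setIntegral_congr_fun measurableSet_Ioc ?_
  intro y hy
  simp only
  rw [wm_integral h12 (m1pos h23), ← intervalIntegral.integral_mul_const]
  rw [intervalIntegral.integral_of_le h12.le, intervalIntegral.integral_of_le h12.le]
  refine setIntegral_congr_fun measurableSet_Ioc ?_
  intro x hx
  simp only
  have e1 := wA_nonneg (m1pos (l1 := l1) h23) ⟨hx.1.le, hx.2⟩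
  have e2 := wA_nonneg (m2pos (l3 := l3) h12) ⟨hy.1.le, hy.2⟩
  rw [mul_assoc, ← Real.mul_rpow e1 e2]
  unfold Wk wA
  congr 2; ring

lemma mm_ibp1 {k l1 l2 l3 : ℝ} (hk : 0 < k) (h12 : l2 < l1) (h23 : l3 < l2) {g g' : ℝ → ℝ → ℝ}
    (hg : Continuous (fun w : ℝ × ℝ => g w.1 w.2)) (hg' : Continuous (fun w : ℝ × ℝ => g' w.1 w.2))
    (hd : ∀ x y, HasDerivAt (fun x => g x y) (g' x y) x) :
    ∫ w, ((l1 - w.1) * (w.1 - l2) * (w.1 - l3) * g' w.1 w.2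
      + k * (-(w.1 - l2) * (w.1 - l3) + (l1 - w.1) * (w.1 - l3) + (l1 - w.1) * (w.1 - l2))
        * g w.1 w.2) ∂(mm k l1 l2 l3) = 0 := by
  have := m1_fin hk h12 h23
  have := m2_fin hk h12 h23
  have hi : Integrable (fun w : ℝ × ℝ => (l1 - w.1) * (w.1 - l2) * (w.1 - l3) * g' w.1 w.2
      + k * (-(w.1 - l2) * (w.1 - l3) + (l1 - w.1) * (w.1 - l3) + (l1 - w.1) * (w.1 - l2))
        * g w.1 w.2) (mm k l1 l2 l3) := mm_int hk h12 h23 (Continuous.continuousOn (by fun_prop))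
  unfold mm at hi ⊢
  rw [integral_prod_symm _ hi]
  have : ∀ y, ∫ x, ((l1 - x) * (x - l2) * (x - l3) * g' x y
      + k * (-(x - l2) * (x - l3) + (l1 - x) * (x - l3) + (l1 - x) * (x - l2))
        * g x y) ∂(m1 k l1 l2 l3) = 0 := by
    intro y
    have := wm_ibp hk h12 (m1pos h23) (fun x => g x y) (fun x => g' x y) (fun x => hd x y)
      (hg'.comp (by fun_prop : Continuous fun x : ℝ => (x, y)))
    rw [← this]
    unfold m1
    congr 1; ext x; unfold wA; ring
  simp only [this, integral_zero]

lemma mm_ibp2 {k l1 l2 l3 : ℝ} (hk : 0 < k) (h12 : l2 < l1) (h23 : l3 < l2) {g g' : ℝ → ℝ → ℝ}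
    (hg : Continuous (fun w : ℝ × ℝ => g w.1 w.2)) (hg' : Continuous (fun w : ℝ × ℝ => g' w.1 w.2))
    (hd : ∀ x y, HasDerivAt (fun y => g x y) (g' x y) y) :
    ∫ w, ((l2 - w.2) * (w.2 - l3) * (l1 - w.2) * g' w.1 w.2
      + k * (-(w.2 - l3) * (l1 - w.2) + (l2 - w.2) * (l1 - w.2) - (l2 - w.2) * (w.2 - l3))
        * g w.1 w.2) ∂(mm k l1 l2 l3) = 0 := by
  have := m1_fin hk h12 h23
  have := m2_fin hk h12 h23
  have hi : Integrable (fun w : ℝ × ℝ => (l2 - w.2) * (w.2 - l3) * (l1 - w.2) * g' w.1 w.2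
      + k * (-(w.2 - l3) * (l1 - w.2) + (l2 - w.2) * (l1 - w.2) - (l2 - w.2) * (w.2 - l3))
        * g w.1 w.2) (mm k l1 l2 l3) := mm_int hk h12 h23 (Continuous.continuousOn (by fun_prop))
  unfold mm at hi ⊢
  rw [integral_prod _ hi]
  have : ∀ x, ∫ y, ((l2 - y) * (y - l3) * (l1 - y) * g' x y
      + k * (-(y - l3) * (l1 - y) + (l2 - y) * (l1 - y) - (l2 - y) * (y - l3))
        * g x y) ∂(m2 k l1 l2 l3) = 0 := by
    intro x
    have := wm_ibp hk h23 (m2pos h12) (fun y => g x y) (fun y => g' x y) (fun y => hd x y)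
      (hg'.comp (by fun_prop : Continuous fun y : ℝ => (x, y)))
    rw [← this]
    unfold m2
    congr 1; ext y; unfold wA; ring
  simp only [this, integral_zero]

/-- the flip of the measure -/
lemma mm_flip {k l1 l2 l3 : ℝ} (hk : 0 < k) (h12 : l2 < l1) (h23 : l3 < l2) {f : ℝ → ℝ → ℝ}
    (hf : Continuous (fun w : ℝ × ℝ => f w.1 w.2)) :
    ∫ w, f w.1 w.2 ∂(mm k (-l3) (-l2) (-l1)) = ∫ w, f (-w.2) (-w.1) ∂(mm k l1 l2 l3) := by
  have h12' : -l2 < -l3 := by linarith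
  have h23' : -l1 < -l2 := by linarith
  have := m1_fin hk h12 h23
  have := m2_fin hk h12 h23
  have := m1_fin hk h12' h23'
  have := m2_fin hk h12' h23'
  have hi := mm_int hk h12' h23' hf.continuousOn
  have hi2 := mm_int hk h12 h23 (f := fun w => f (-w.2) (-w.1)) (Continuous.continuousOn
    (hf.comp (by fun_prop : Continuous fun w : ℝ × ℝ => (-w.2, -w.1))))
  unfold mm at hi hi2 ⊢
  rw [integral_prod_symm _ hi, integral_prod _ hi2]
  have e1 : ∀ h : ℝ → ℝ, ∫ x, h x ∂(m1 k (-l3) (-l2) (-l1)) = ∫ x, h (-x) ∂(m2 k l1 l2 l3) := by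
    intro h
    unfold m1 m2
    rw [wm_integral h12' (m1pos h23'), wm_integral h23 (m2pos h12),
      ← intervalIntegral.integral_comp_neg]
    congr 1; ext x; congr 2; unfold wA; ring
  have e2 : ∀ h : ℝ → ℝ, ∫ x, h x ∂(m2 k (-l3) (-l2) (-l1)) = ∫ x, h (-x) ∂(m1 k l1 l2 l3) := by
    intro h
    unfold m1 m2
    rw [wm_integral h23' (m2pos h12'), wm_integral h12 (m1pos h23),
      ← intervalIntegral.integral_comp_neg]
    congr 1; ext x; congr 2; unfold wA; ring
  rw [e2]
  simp only [e1]

/-! ### the system of six functions -/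

def K1 (a b c x y : ℝ) : ℝ := (x - b) * (a - y) * ((x - c) * (y - c))
def K2 (a b c x y : ℝ) : ℝ := (a - x) * (b - y) * ((x - c) * (y - c))

noncomputable def ph (k s d r x y : ℝ) : ℝ :=
  Real.exp (r * (s * (x + y))) * ee k (r * (d * (x - y)))
noncomputable def pr (k s d r x y : ℝ) : ℝ :=
  Real.exp (r * (s * (x + y))) * (s * (x + y) * ee k (r * (d * (x - y)))
    + d * (x - y) * de k (r * (d * (x - y))))
noncomputable def px (k s d r x y : ℝ) : ℝ :=
  Real.exp (r * (s * (x + y))) * (r * s * ee k (r * (d * (x - y)))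
    + r * d * de k (r * (d * (x - y))))
noncomputable def py (k s d r x y : ℝ) : ℝ :=
  Real.exp (r * (s * (x + y))) * (r * s * ee k (r * (d * (x - y)))
    - r * d * de k (r * (d * (x - y))))

lemma ph_dr {k : ℝ} (hk : 0 < k) (s d r x y : ℝ) :
    HasDerivAt (fun r => ph k s d r x y) (pr k s d r x y) r := by
  have h1 : HasDerivAt (fun r : ℝ => r * (s * (x + y))) (s * (x + y)) r := by
    simpa using (hasDerivAt_id r).mul_const (s * (x + y))
  have h2 : HasDerivAt (fun r : ℝ => r * (d * (x - y))) (d * (x - y)) r := by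
    simpa using (hasDerivAt_id r).mul_const (d * (x - y))
  have := h1.exp.mul ((ee_hasDeriv hk _).comp r h2)
  refine this.congr_deriv ?_
  simp only [pr, Function.comp]; ring

lemma ph_dx {k : ℝ} (hk : 0 < k) (s d r x y : ℝ) :
    HasDerivAt (fun x => ph k s d r x y) (px k s d r x y) x := by
  have h1 : HasDerivAt (fun x : ℝ => r * (s * (x + y))) (r * s) x := by
    simpa using (((hasDerivAt_id x).add_const y).const_mul s).const_mul r
  have h2 : HasDerivAt (fun x : ℝ => r * (d * (x - y))) (r * d) x := by
    simpa using (((hasDerivAt_id x).sub_const y).const_mul d).const_mul r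
  have := h1.exp.mul ((ee_hasDeriv hk _).comp x h2)
  refine this.congr_deriv ?_
  simp only [px, Function.comp]; ring

lemma ph_dy {k : ℝ} (hk : 0 < k) (s d r x y : ℝ) :
    HasDerivAt (fun y => ph k s d r x y) (py k s d r x y) y := by
  have h1 : HasDerivAt (fun y : ℝ => r * (s * (x + y))) (r * s) y := by
    simpa using (((hasDerivAt_id y).const_add x).const_mul s).const_mul r
  have h2 : HasDerivAt (fun y : ℝ => r * (d * (x - y))) (-(r * d)) y := by
    simpa using (((hasDerivAt_id y).const_sub x).const_mul d).const_mul r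
  have := h1.exp.mul ((ee_hasDeriv hk _).comp y h2)
  refine this.congr_deriv ?_
  simp only [py, Function.comp]; ring

lemma ph_c {k : ℝ} (hk : 0 < k) (s d : ℝ) :
    Continuous (fun q : ℝ × (ℝ × ℝ) => ph k s d q.1 q.2.1 q.2.2) := by
  have := ee_cont hk
  unfold ph; fun_prop
lemma pr_c {k : ℝ} (hk : 0 < k) (s d : ℝ) :
    Continuous (fun q : ℝ × (ℝ × ℝ) => pr k s d q.1 q.2.1 q.2.2) := by
  have := ee_cont hk
  have := de_cont hk
  unfold pr; fun_prop
lemma ph_c2 {k : ℝ} (hk : 0 < k) (s d r : ℝ) :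
    Continuous (fun q : ℝ × ℝ => ph k s d r q.1 q.2) := by
  have := ee_cont hk
  unfold ph; fun_prop
lemma pr_c2 {k : ℝ} (hk : 0 < k) (s d r : ℝ) :
    Continuous (fun q : ℝ × ℝ => pr k s d r q.1 q.2) := by
  have := ee_cont hk
  have := de_cont hk
  unfold pr; fun_prop
lemma px_c2 {k : ℝ} (hk : 0 < k) (s d r : ℝ) :
    Continuous (fun q : ℝ × ℝ => px k s d r q.1 q.2) := by
  have := ee_cont hk
  have := de_cont hk
  unfold px; fun_prop
lemma py_c2 {k : ℝ} (hk : 0 < k) (s d r : ℝ) :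
    Continuous (fun q : ℝ × ℝ => py k s d r q.1 q.2) := by
  have := ee_cont hk
  have := de_cont hk
  unfold py; fun_prop

noncomputable def gi (k s d a b c r : ℝ) (w : ℝ × ℝ) : ℝ :=
  K1 a b c w.1 w.2 * ph k s d r w.1 w.2 + K2 a b c w.1 w.2 * ph k s (-d) r w.1 w.2
noncomputable def gi' (k s d a b c r : ℝ) (w : ℝ × ℝ) : ℝ :=
  K1 a b c w.1 w.2 * pr k s d r w.1 w.2 + K2 a b c w.1 w.2 * pr k s (-d) r w.1 w.2

noncomputable def Gf (k l1 l2 l3 s d a b c r : ℝ) : ℝ :=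
  ∫ w, gi k s d a b c r w ∂(mm k l1 l2 l3)
noncomputable def Gf' (k l1 l2 l3 s d a b c r : ℝ) : ℝ :=
  ∫ w, gi' k s d a b c r w ∂(mm k l1 l2 l3)

lemma gi_c {k : ℝ} (hk : 0 < k) (s d a b c r : ℝ) : Continuous (gi k s d a b c r) := by
  have h1 := ph_c2 hk s d r
  have h2 := ph_c2 hk s (-d) r
  unfold gi K1 K2; fun_prop
lemma gi'_c {k : ℝ} (hk : 0 < k) (s d a b c r : ℝ) : Continuous (gi' k s d a b c r) := by
  have h1 := pr_c2 hk s d r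
  have h2 := pr_c2 hk s (-d) r
  unfold gi' K1 K2; fun_prop

lemma Gf_deriv {k l1 l2 l3 : ℝ} (hk : 0 < k) (h12 : l2 < l1) (h23 : l3 < l2) (s d a b c r : ℝ) :
    HasDerivAt (Gf k l1 l2 l3 s d a b c) (Gf' k l1 l2 l3 s d a b c r) r := by
  have := m1_fin hk h12 h23
  have := m2_fin hk h12 h23
  have : IsFiniteMeasure (mm k l1 l2 l3) := by unfold mm; infer_instance
  refine deriv_int (f := fun r w => gi k s d a b c r w) (f' := fun r w => gi' k s d a b c r w)
    (isCompact_Icc.prod isCompact_Icc) (mm_mem hk h12 h23) (fun t => gi_c hk s d a b c t) ?_ ?_ r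
  · have h1 := pr_c hk s d
    have h2 := pr_c hk s (-d)
    unfold gi' K1 K2; fun_prop
  · intro t w
    exact ((ph_dr hk s d t w.1 w.2).const_mul _).add ((ph_dr hk s (-d) t w.1 w.2).const_mul _)

lemma Gf_ode {k l1 l2 l3 : ℝ} (hk : 0 < k) (h12 : l2 < l1) (h23 : l3 < l2) (s d a b c r : ℝ)
    (hp : ∀ x, (x - l1) * (x - l2) * (x - l3) = (x - a) * (x - b) * (x - c))
    (hp' : ∀ x, (x - l1) * (x - l2) + (x - l1) * (x - l3) + (x - l2) * (x - l3)
      = (x - a) * (x - b) + (x - a) * (x - c) + (x - b) * (x - c)) :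
    r * Gf' k l1 l2 l3 s d a b c r = r * ((s + d) * a + (s - d) * b) * Gf k l1 l2 l3 s d a b c r
      - k * (3 * Gf k l1 l2 l3 s d a b c r + Gf k l1 l2 l3 s d b a c r
        + Gf k l1 l2 l3 s d c b a r + Gf k l1 l2 l3 s d a c b r) := by
  have cp1 := ph_c2 hk s d r
  have cp2 := ph_c2 hk s (-d) r
  have cx1 := px_c2 hk s d r
  have cx2 := px_c2 hk s (-d) r
  have cy1 := py_c2 hk s d r
  have cy2 := py_c2 hk s (-d) r
  have I1 := mm_ibp1 hk h12 h23 (g := fun x y => ph k s d r x y * ((a - y) * (y - c)))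
    (g' := fun x y => px k s d r x y * ((a - y) * (y - c))) (by fun_prop) (by fun_prop)
    (fun x y => (ph_dx hk s d r x y).mul_const _)
  have I3 := mm_ibp1 hk h12 h23 (g := fun x y => ph k s (-d) r x y * ((b - y) * (y - c)))
    (g' := fun x y => px k s (-d) r x y * ((b - y) * (y - c))) (by fun_prop) (by fun_prop)
    (fun x y => (ph_dx hk s (-d) r x y).mul_const _)
  have I2 := mm_ibp2 hk h12 h23 (g := fun x y => ph k s d r x y * ((x - b) * (x - c)))
    (g' := fun x y => py k s d r x y * ((x - b) * (x - c))) (by fun_prop) (by fun_prop)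
    (fun x y => (ph_dy hk s d r x y).mul_const _)
  have I4 := mm_ibp2 hk h12 h23 (g := fun x y => ph k s (-d) r x y * ((a - x) * (x - c)))
    (g' := fun x y => py k s (-d) r x y * ((a - x) * (x - c))) (by fun_prop) (by fun_prop)
    (fun x y => (ph_dy hk s (-d) r x y).mul_const _)
  have ii : ∀ {f : ℝ × ℝ → ℝ}, Continuous f → Integrable f (mm k l1 l2 l3) :=
    fun hf => mm_int hk h12 h23 hf.continuousOn
  have hG := fun a b c => gi_c hk s d a b c r
  have hG' := gi'_c hk s d a b c r
  have hZ : r * Gf' k l1 l2 l3 s d a b c r - r * ((s + d) * a + (s - d) * b) *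
      Gf k l1 l2 l3 s d a b c r
      + k * (3 * Gf k l1 l2 l3 s d a b c r + Gf k l1 l2 l3 s d b a c r
        + Gf k l1 l2 l3 s d c b a r + Gf k l1 l2 l3 s d a c b r)
      = ∫ w, (r * gi' k s d a b c r w - r * ((s + d) * a + (s - d) * b) * gi k s d a b c r w
        + k * (3 * gi k s d a b c r w + gi k s d b a c r w + gi k s d c b a r w
          + gi k s d a c b r w)) ∂(mm k l1 l2 l3) := by
    unfold Gf Gf'
    have h1 := hG a b c
    have h2 := hG b a c
    have h3 := hG c b a
    have h4 := hG a c b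
    rw [integral_add (ii (by fun_prop)) (ii (by fun_prop)),
      integral_sub (ii (by fun_prop)) (ii (by fun_prop)), integral_const_mul, integral_const_mul,
      integral_const_mul, integral_add (ii (by fun_prop)) (ii (by fun_prop)),
      integral_add (ii (by fun_prop)) (ii (by fun_prop)),
      integral_add (ii (by fun_prop)) (ii (by fun_prop)), integral_const_mul]
  suffices h : ∫ w, (r * gi' k s d a b c r w - r * ((s + d) * a + (s - d) * b) * gi k s d a b c r w
        + k * (3 * gi k s d a b c r w + gi k s d b a c r w + gi k s d c b a r w
          + gi k s d a c b r w)) ∂(mm k l1 l2 l3) = 0 by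
    rw [h] at hZ; linarith
  have e0 : ∀ w : ℝ × ℝ, (r * gi' k s d a b c r w
        - r * ((s + d) * a + (s - d) * b) * gi k s d a b c r w
        + k * (3 * gi k s d a b c r w + gi k s d b a c r w + gi k s d c b a r w
          + gi k s d a c b r w)) =
      -((l1 - w.1) * (w.1 - l2) * (w.1 - l3) * (px k s d r w.1 w.2 * ((a - w.2) * (w.2 - c)))
      + k * (-(w.1 - l2) * (w.1 - l3) + (l1 - w.1) * (w.1 - l3) + (l1 - w.1) * (w.1 - l2))
        * (ph k s d r w.1 w.2 * ((a - w.2) * (w.2 - c))))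
      - ((l2 - w.2) * (w.2 - l3) * (l1 - w.2) * (py k s d r w.1 w.2 * ((w.1 - b) * (w.1 - c)))
      + k * (-(w.2 - l3) * (l1 - w.2) + (l2 - w.2) * (l1 - w.2) - (l2 - w.2) * (w.2 - l3))
        * (ph k s d r w.1 w.2 * ((w.1 - b) * (w.1 - c))))
      + ((l1 - w.1) * (w.1 - l2) * (w.1 - l3) * (px k s (-d) r w.1 w.2 * ((b - w.2) * (w.2 - c)))
      + k * (-(w.1 - l2) * (w.1 - l3) + (l1 - w.1) * (w.1 - l3) + (l1 - w.1) * (w.1 - l2))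
        * (ph k s (-d) r w.1 w.2 * ((b - w.2) * (w.2 - c))))
      - ((l2 - w.2) * (w.2 - l3) * (l1 - w.2) * (py k s (-d) r w.1 w.2 * ((a - w.1) * (w.1 - c)))
      + k * (-(w.2 - l3) * (l1 - w.2) + (l2 - w.2) * (l1 - w.2) - (l2 - w.2) * (w.2 - l3))
        * (ph k s (-d) r w.1 w.2 * ((a - w.1) * (w.1 - c)))) := by
    rintro ⟨x, y⟩
    have q1 := hp x
    have q2 := hp y
    have q3 := hp' x
    have q4 := hp' y
    have t1 : (l1 - x) * (x - l2) * (x - l3) = -((x - a) * (x - b) * (x - c)) := by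
      rw [← q1]; ring
    have t2 : (l2 - y) * (y - l3) * (l1 - y) = ((y - a) * (y - b) * (y - c)) := by
      rw [← q2]; ring
    have t3 : (-(x - l2) * (x - l3) + (l1 - x) * (x - l3) + (l1 - x) * (x - l2))
      = -((x - a) * (x - b) + (x - a) * (x - c) + (x - b) * (x - c)) := by
      rw [← q3]; ring
    have t4 : (-(y - l3) * (l1 - y) + (l2 - y) * (l1 - y) - (l2 - y) * (y - l3))
      = ((y - a) * (y - b) + (y - a) * (y - c) + (y - b) * (y - c)) := by
      rw [← q4]; ring
    simp only [t1, t2, t3, t4]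
    have hd := dl_eq hk (r * (d * (x - y)))
    simp only [gi, gi', pr, px, py, ph]
    rw [show r * (-d * (x - y)) = -(r * (d * (x - y))) by ring]
    rw [de_eq hk, de_eq hk (-(r * (d * (x - y)))), dl_even]
    generalize Real.exp (r * (s * (x + y))) = E at *
    generalize ee k (r * (d * (x - y))) = e1 at *
    generalize ee k (-(r * (d * (x - y)))) = e2 at *
    generalize dl k (r * (d * (x - y))) = δ at *
    simp only [K1, K2]
    linear_combination (-(a - b) ^ 2 * (x - c) * (y - c) * E) * hd
  rw [integral_congr_ae (Filter.Eventually.of_forall e0)]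
  rw [integral_sub (ii (by fun_prop)) (ii (by fun_prop)),
    integral_add (ii (by fun_prop)) (ii (by fun_prop)),
    integral_sub (ii (by fun_prop)) (ii (by fun_prop)), integral_neg, I1, I2, I3, I4]
  ring

/-! ### uniqueness and duality -/

lemma uniq {k : ℝ} (hk : 0 < k) (D D' : ℝ → ℝ → ℝ → ℝ → ℝ) (m : ℝ → ℝ → ℝ → ℝ)
    (Per : ℝ → ℝ → ℝ → Prop) (a b c : ℝ)
    (hd : ∀ a b c r, HasDerivAt (D a b c) (D' a b c r) r)
    (ho : ∀ a b c r, Per a b c → r * D' a b c r = r * m a b c * D a b c r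
      - k * (3 * D a b c r + D b a c r + D c b a r + D a c b r))
    (p1 : Per a b c) (p2 : Per b c a) (p3 : Per c a b)
    (q1 : Per b a c) (q2 : Per c b a) (q3 : Per a c b)
    (z1 : D a b c 0 = 0) (z2 : D b c a 0 = 0) (z3 : D c a b 0 = 0)
    (y1 : D b a c 0 = 0) (y2 : D c b a 0 = 0) (y3 : D a c b 0 = 0) :
    D a b c 1 = 0 := by
  obtain ⟨M, hM1, hM2, hM3, hM4, hM5, hM6⟩ : ∃ M : ℝ, m a b c ≤ M ∧ m b c a ≤ M ∧ m c a b ≤ M ∧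
      m b a c ≤ M ∧ m c b a ≤ M ∧ m a c b ≤ M := by
    refine ⟨|m a b c| + |m b c a| + |m c a b| + |m b a c| + |m c b a| + |m a c b|, ?_⟩
    have := abs_nonneg (m a b c)
    have := abs_nonneg (m b c a)
    have := abs_nonneg (m c a b)
    have := abs_nonneg (m b a c)
    have := abs_nonneg (m c b a)
    have := abs_nonneg (m a c b)
    have := le_abs_self (m a b c)
    have := le_abs_self (m b c a)
    have := le_abs_self (m c a b)
    have := le_abs_self (m b a c)
    have := le_abs_self (m c b a)
    have := le_abs_self (m a c b)
    refine ⟨?_, ?_, ?_, ?_, ?_, ?_⟩ <;> linarith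
  set S : ℝ → ℝ := fun r => D a b c r * D a b c r + D b c a r * D b c a r + D c a b r * D c a b r
    + D b a c r * D b a c r + D c b a r * D c b a r + D a c b r * D a c b r with hS
  set S' : ℝ → ℝ := fun r => 2 * (D a b c r * D' a b c r + D b c a r * D' b c a r
    + D c a b r * D' c a b r
    + D b a c r * D' b a c r + D c b a r * D' c b a r + D a c b r * D' a c b r) with hS'
  have hSd : ∀ r, HasDerivAt S (S' r) r := by
    intro r
    have := ((((((hd a b c r).mul (hd a b c r)).add ((hd b c a r).mul (hd b c a r))).add
      ((hd c a b r).mul (hd c a b r))).add ((hd b a c r).mul (hd b a c r))).add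
      ((hd c b a r).mul (hd c b a r))).add ((hd a c b r).mul (hd a c b r))
    refine this.congr_deriv ?_
    simp only [hS']; ring
  have hle : ∀ r, 0 < r → S' r ≤ 2 * M * S r := by
    intro r hr
    have e1 := ho a b c r p1
    have e2 := ho b c a r p2
    have e3 := ho c a b r p3
    have f1 := ho b a c r q1
    have f2 := ho c b a r q2
    have f3 := ho a c b r q3
    have key : r * S' r ≤ r * (2 * M * S r) := by
      simp only [hS, hS']
      have n1 := mul_nonneg (mul_nonneg hr.le (sub_nonneg.2 hM1)) (mul_self_nonneg (D a b c r))
      have n2 := mul_nonneg (mul_nonneg hr.le (sub_nonneg.2 hM2)) (mul_self_nonneg (D b c a r))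
      have n3 := mul_nonneg (mul_nonneg hr.le (sub_nonneg.2 hM3)) (mul_self_nonneg (D c a b r))
      have n4 := mul_nonneg (mul_nonneg hr.le (sub_nonneg.2 hM4)) (mul_self_nonneg (D b a c r))
      have n5 := mul_nonneg (mul_nonneg hr.le (sub_nonneg.2 hM5)) (mul_self_nonneg (D c b a r))
      have n6 := mul_nonneg (mul_nonneg hr.le (sub_nonneg.2 hM6)) (mul_self_nonneg (D a c b r))
      generalize D a b c r = v1 at *
      generalize D b c a r = v2 at *
      generalize D c a b r = v3 at *
      generalize D b a c r = o1 at *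
      generalize D c b a r = o2 at *
      generalize D a c b r = o3 at *
      have sq : 0 ≤ k * ((v1 + o1) ^ 2 + (v1 + o2) ^ 2 + (v1 + o3) ^ 2 + (v2 + o1) ^ 2
        + (v2 + o2) ^ 2 + (v2 + o3) ^ 2 + (v3 + o1) ^ 2 + (v3 + o2) ^ 2 + (v3 + o3) ^ 2) := by
        positivity
      have g1 := congrArg (v1 * ·) e1
      have g2 := congrArg (v2 * ·) e2
      have g3 := congrArg (v3 * ·) e3
      have g4 := congrArg (o1 * ·) f1
      have g5 := congrArg (o2 * ·) f2
      have g6 := congrArg (o3 * ·) f3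
      linarith
    exact le_of_mul_le_mul_left key hr
  have hanti : AntitoneOn (fun r => S r * Real.exp (-(2 * M) * r)) (Set.Icc 0 1) := by
    have hdd : ∀ r, HasDerivAt (fun r => S r * Real.exp (-(2 * M) * r))
        ((S' r - 2 * M * S r) * Real.exp (-(2 * M) * r)) r := by
      intro r
      have h2 : HasDerivAt (fun r : ℝ => -(2 * M) * r) (-(2 * M)) r := by
        simpa using (hasDerivAt_id r).const_mul (-(2 * M))
      refine ((hSd r).mul h2.exp).congr_deriv ?_
      ring
    refine antitoneOn_of_deriv_nonpos (convex_Icc 0 1)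
      (fun r _ => (hdd r).continuousAt.continuousWithinAt)
      (fun r _ => (hdd r).differentiableAt.differentiableWithinAt) ?_
    intro r hr
    rw [interior_Icc] at hr
    rw [(hdd r).deriv]
    exact mul_nonpos_of_nonpos_of_nonneg (by linarith [hle r hr.1]) (Real.exp_pos _).le
  have h01 := hanti (Set.left_mem_Icc.2 zero_le_one) (Set.right_mem_Icc.2 zero_le_one) zero_le_one
  have hS0 : S 0 = 0 := by simp only [hS, z1, z2, z3, y1, y2, y3]; ring
  simp only [hS0, zero_mul] at h01
  have hS1 : S 1 ≤ 0 := by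
    by_contra h
    push Not at h
    have := mul_pos h (Real.exp_pos (-(2 * M) * 1))
    linarith
  simp only [hS] at hS1
  have : D a b c 1 * D a b c 1 ≤ 0 := by
    nlinarith [mul_self_nonneg (D b c a 1), mul_self_nonneg (D c a b 1), mul_self_nonneg (D b a c 1),
      mul_self_nonneg (D c b a 1), mul_self_nonneg (D a c b 1)]
  exact mul_self_eq_zero.1 (le_antisymm this (mul_self_nonneg _))

lemma gi_zero (k s d a b c x y : ℝ) :
    gi k s d a b c 0 (x, y) = ee k 0 * ((a - b) * (x - y) * ((x - c) * (y - c))) := by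
  simp only [gi, ph, K1, K2, zero_mul, Real.exp_zero]; ring

lemma duality {k l1 l2 l3 : ℝ} (hk : 0 < k) (h12 : l2 < l1) (h23 : l3 < l2)
    (hl : l1 + l2 + l3 = 0) (x1 x2 x3 : ℝ) :
    Gf k l1 l2 l3 ((x1 + x2 - 2 * x3) / 2) ((x1 - x2) / 2) l1 l2 l3 1
      = Gf k (-l3) (-l2) (-l1) ((2 * x1 - x2 - x3) / 2) ((x2 - x3) / 2) (-l3) (-l2) (-l1) 1 := by
  have h12' : -l2 < -l3 := by linarith
  have h23' : -l1 < -l2 := by linarith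
  set s := (x1 + x2 - 2 * x3) / 2 with hs
  set d := (x1 - x2) / 2 with hd
  set s' := (2 * x1 - x2 - x3) / 2 with hs'
  set d' := (x2 - x3) / 2 with hd'
  set P : ℝ → ℝ → ℝ → ℝ → ℝ := fun a b c r => Gf k l1 l2 l3 s d a b c r with hP
  set Q : ℝ → ℝ → ℝ → ℝ → ℝ := fun a b c r => Gf k (-l3) (-l2) (-l1) s' d' (-c) (-b) (-a) r with hQ
  set Per : ℝ → ℝ → ℝ → Prop := fun a b c =>
    (∀ x, (x - l1) * (x - l2) * (x - l3) = (x - a) * (x - b) * (x - c)) ∧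
    (∀ x, (x - l1) * (x - l2) + (x - l1) * (x - l3) + (x - l2) * (x - l3)
      = (x - a) * (x - b) + (x - a) * (x - c) + (x - b) * (x - c)) ∧ a + b + c = 0 with hPer
  have oP : ∀ a b c r, Per a b c → r * Gf' k l1 l2 l3 s d a b c r =
      r * ((x1 - x3) * a + (x2 - x3) * b) * P a b c r
      - k * (3 * P a b c r + P b a c r + P c b a r + P a c b r) := by
    intro a b c r h
    rw [Gf_ode hk h12 h23 s d a b c r h.1 h.2.1]
    simp only [hP, hs, hd]; ring
  have oQ : ∀ a b c r, Per a b c → r * Gf' k (-l3) (-l2) (-l1) s' d' (-c) (-b) (-a) r =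
      r * ((x1 - x3) * a + (x2 - x3) * b) * Q a b c r
      - k * (3 * Q a b c r + Q b a c r + Q c b a r + Q a c b r) := by
    intro a b c r h
    rw [Gf_ode hk h12' h23' s' d' (-c) (-b) (-a) r ?_ ?_]
    · simp only [hQ, hs', hd']
      have : c = -a - b := by linarith [h.2.2]
      subst this
      ring
    · intro x; linear_combination - h.1 (-x)
    · intro x; linear_combination h.2.1 (-x)
  have p1 : Per l1 l2 l3 := ⟨fun x => by ring, fun x => by ring, by linarith⟩
  have p2 : Per l2 l3 l1 := ⟨fun x => by ring, fun x => by ring, by linarith⟩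
  have p3 : Per l3 l1 l2 := ⟨fun x => by ring, fun x => by ring, by linarith⟩
  have q1 : Per l2 l1 l3 := ⟨fun x => by ring, fun x => by ring, by linarith⟩
  have q2 : Per l3 l2 l1 := ⟨fun x => by ring, fun x => by ring, by linarith⟩
  have q3 : Per l1 l3 l2 := ⟨fun x => by ring, fun x => by ring, by linarith⟩
  have zero_eq : ∀ (T T' : ℝ → ℝ → ℝ → ℝ → ℝ) (m : ℝ → ℝ → ℝ → ℝ), (∀ a b c r, Per a b c →
      r * T' a b c r = r * m a b c * T a b c r
      - k * (3 * T a b c r + T b a c r + T c b a r + T a c b r)) →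
      ∀ a b c, Per a b c → 3 * T a b c 0 + T b a c 0 + T c b a 0 + T a c b 0 = 0 := by
    intro T T' m h a b c hp
    have := h a b c 0 hp
    have h2 : k * (3 * T a b c 0 + T b a c 0 + T c b a 0 + T a c b 0) = 0 := by linarith
    exact (mul_eq_zero.1 h2).resolve_left hk.ne'
  have zP := zero_eq P _ (fun a b c => (x1 - x3) * a + (x2 - x3) * b) oP
  have zQ := zero_eq Q (fun a b c r => Gf' k (-l3) (-l2) (-l1) s' d' (-c) (-b) (-a) r)
    (fun a b c => (x1 - x3) * a + (x2 - x3) * b) oQ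
  have hPQ : P l3 l2 l1 0 = - Q l1 l2 l3 0 := by
    simp only [hP, hQ, Gf]
    have := mm_flip hk h12 h23 (f := fun x y => gi k s' d' (-l3) (-l2) (-l1) 0 (x, y))
      (gi_c hk s' d' (-l3) (-l2) (-l1) 0)
    simp only [Prod.mk.eta] at this
    rw [this, ← integral_neg]
    congr 1; ext ⟨x, y⟩
    rw [gi_zero, gi_zero]; ring
  have a1 := zP _ _ _ p1
  have a2 := zP _ _ _ p2
  have a3 := zP _ _ _ p3
  have a4 := zP _ _ _ q1
  have a5 := zP _ _ _ q2
  have a6 := zP _ _ _ q3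
  have b1 := zQ _ _ _ p1
  have b2 := zQ _ _ _ p2
  have b3 := zQ _ _ _ p3
  have b4 := zQ _ _ _ q1
  have b5 := zQ _ _ _ q2
  have b6 := zQ _ _ _ q3
  have := uniq hk (fun a b c r => P a b c r - Q a b c r)
    (fun a b c r => Gf' k l1 l2 l3 s d a b c r - Gf' k (-l3) (-l2) (-l1) s' d' (-c) (-b) (-a) r)
    (fun a b c => (x1 - x3) * a + (x2 - x3) * b) Per l1 l2 l3
    (fun a b c r => (Gf_deriv hk h12 h23 s d a b c r).sub
      (Gf_deriv hk h12' h23' s' d' (-c) (-b) (-a) r))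
    (fun a b c r h => by
      have e1 := oP a b c r h
      have e2 := oQ a b c r h
      linear_combination e1 - e2) p1 p2 p3 q1 q2 q3
    (by linarith) (by linarith) (by linarith)
    (by linarith) (by linarith) (by linarith)
  exact sub_eq_zero.1 this

/-! ### estimates for the rank one function -/

lemma ypos : ∀ x ∈ Set.Icc (0 : ℝ) 2, 0 < (1 : ℝ) + 0 * x := by
  intro x _; norm_num

lemma ee_pos_eq (k t : ℝ) : ee k t = Real.exp t *
    ∫ y in (0:ℝ)..2, (Real.exp (-(t * y)) * (2 - y)) * wA 0 2 1 0 y ^ (k - 1) := by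
  unfold ee
  rw [wm_integral (by norm_num) zpos]
  have := intervalIntegral.integral_comp_sub_left (a := 0) (b := 2)
    (fun z => Real.exp (z * t) * (1 + z) * wA (-1) 1 1 0 z ^ (k - 1)) 1
  rw [show (1:ℝ) - 2 = -1 by norm_num, sub_zero] at this
  rw [← this, ← intervalIntegral.integral_const_mul]
  congr 1; ext y
  rw [show (1 - y) * t = t + -(t * y) by ring, Real.exp_add,
    show wA (-1) 1 1 0 (1 - y) = wA 0 2 1 0 y by unfold wA; ring]
  ring

lemma ee_neg_eq (k t : ℝ) : ee k (-t) = Real.exp t *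
    ∫ y in (0:ℝ)..2, (Real.exp (-(t * y)) * y) * wA 0 2 1 0 y ^ (k - 1) := by
  rw [ee_neg]
  rw [wm_integral (by norm_num) zpos]
  have := intervalIntegral.integral_comp_sub_left (a := 0) (b := 2)
    (fun z => Real.exp (z * t) * (1 - z) * wA (-1) 1 1 0 z ^ (k - 1)) 1
  rw [show (1:ℝ) - 2 = -1 by norm_num, sub_zero] at this
  rw [← this, ← intervalIntegral.integral_const_mul]
  congr 1; ext y
  rw [show (1 - y) * t = t + -(t * y) by ring, Real.exp_add,
    show wA (-1) 1 1 0 (1 - y) = wA 0 2 1 0 y by unfold wA; ring]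
  ring

lemma up_gamma {p t : ℝ} (hp : 0 < p) (ht : 0 ≤ t) :
    ∫ y in (0:ℝ)..2, y ^ (p - 1) * Real.exp (-(t * y))
      ≤ Real.exp 2 * Real.Gamma p * (1 + t) ^ (-p) := by
  have h1 : (0:ℝ) < 1 + t := by linarith
  have hI := Real.integral_rpow_mul_exp_neg_mul_Ioi hp h1
  have hint : IntegrableOn (fun y : ℝ => y ^ (p - 1) * Real.exp (-((1 + t) * y))) (Set.Ioi 0) := by
    by_contra hn
    rw [integral_undef hn] at hI
    have : 0 < (1 / (1 + t)) ^ p * Real.Gamma p :=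
      mul_pos (Real.rpow_pos_of_pos (by positivity) _) (Real.Gamma_pos_of_pos hp)
    linarith
  have hr : IntervalIntegrable (fun y : ℝ => y ^ (p - 1)) volume 0 2 :=
    intervalIntegral.intervalIntegrable_rpow' (by linarith)
  calc ∫ y in (0:ℝ)..2, y ^ (p - 1) * Real.exp (-(t * y))
      ≤ ∫ y in (0:ℝ)..2, Real.exp 2 * (y ^ (p - 1) * Real.exp (-((1 + t) * y))) := by
        refine intervalIntegral.integral_mono_on_of_le_Ioo (by norm_num)
          (hr.mul_continuousOn (by fun_prop))
          ((hr.mul_continuousOn (by fun_prop)).const_mul _) ?_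
        intro y hy
        have : Real.exp (-(t * y)) ≤ Real.exp 2 * Real.exp (-((1 + t) * y)) := by
          rw [← Real.exp_add]
          exact Real.exp_le_exp.2 (by linarith [hy.2])
        have h0 : 0 ≤ y ^ (p - 1) := Real.rpow_nonneg hy.1.le _
        nlinarith [mul_le_mul_of_nonneg_left this h0]
    _ = Real.exp 2 * ∫ y in (0:ℝ)..2, (y ^ (p - 1) * Real.exp (-((1 + t) * y))) := by
        rw [intervalIntegral.integral_const_mul]
    _ ≤ Real.exp 2 * ∫ y in Set.Ioi (0:ℝ), (y ^ (p - 1) * Real.exp (-((1 + t) * y))) := by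
        refine mul_le_mul_of_nonneg_left ?_ (Real.exp_pos _).le
        rw [intervalIntegral.integral_of_le (by norm_num)]
        refine setIntegral_mono_set hint ?_ (Filter.Eventually.of_forall ?_)
        · filter_upwards [ae_restrict_mem measurableSet_Ioi] with y hy
          exact mul_nonneg (Real.rpow_nonneg (le_of_lt hy) _) (Real.exp_pos _).le
        · intro y hy; exact hy.1
    _ = _ := by
        rw [hI, one_div, Real.inv_rpow h1.le, Real.rpow_neg h1.le]; ring

lemma low_bd {p t c : ℝ} {f : ℝ → ℝ} (hp : 0 < p) (ht : 0 ≤ t)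
    (hf : IntervalIntegrable f volume 0 2) (h0 : ∀ y ∈ Set.Ioo (0:ℝ) 2, 0 ≤ f y)
    (hlow : ∀ y ∈ Set.Ioo (0:ℝ) 1, t * y ≤ 1 → c * y ^ (p - 1) ≤ f y) :
    c / p * (1 + t) ^ (-p) ≤ ∫ y in (0:ℝ)..2, f y := by
  have h1 : (0:ℝ) < 1 + t := by linarith
  set δ := (1 + t)⁻¹ with hδ
  have hδ0 : 0 < δ := inv_pos.2 h1
  have hδ1 : δ ≤ 1 := inv_le_one_of_one_le₀ (by linarith)
  have htd : t * δ ≤ 1 := by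
    rw [hδ, ← div_eq_mul_inv, div_le_one h1]; linarith
  have hr : IntervalIntegrable (fun y : ℝ => y ^ (p - 1)) volume 0 δ :=
    intervalIntegral.intervalIntegrable_rpow' (by linarith)
  have hf1 : IntervalIntegrable f volume 0 δ := hf.mono_set (by
    rw [Set.uIcc_of_le hδ0.le, Set.uIcc_of_le (by norm_num)]
    exact Set.Icc_subset_Icc le_rfl (by linarith))
  have hf2 : IntervalIntegrable f volume δ 2 := hf.mono_set (by
    rw [Set.uIcc_of_le (by linarith), Set.uIcc_of_le (by norm_num)]
    exact Set.Icc_subset_Icc hδ0.le le_rfl)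
  rw [← intervalIntegral.integral_add_adjacent_intervals hf1 hf2]
  have i1 : ∫ y in (0:ℝ)..δ, c * y ^ (p - 1) ≤ ∫ y in (0:ℝ)..δ, f y := by
    refine intervalIntegral.integral_mono_on_of_le_Ioo hδ0.le (hr.const_mul _) hf1 ?_
    intro y hy
    refine hlow y ⟨hy.1, by linarith [hy.2]⟩ ?_
    have := mul_le_mul_of_nonneg_left hy.2.le ht
    linarith
  have i2 : ∫ y in δ..2, (0:ℝ) ≤ ∫ y in δ..2, f y := by
    refine intervalIntegral.integral_mono_on_of_le_Ioo (by linarith) (by simp) hf2 ?_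
    intro y hy
    exact h0 y ⟨by linarith [hy.1], hy.2⟩
  rw [intervalIntegral.integral_const_mul, integral_rpow (Or.inl (by linarith))] at i1
  simp only [intervalIntegral.integral_zero, sub_add_cancel, Real.zero_rpow hp.ne', sub_zero]
    at i1 i2
  have : δ ^ p = (1 + t) ^ (-p) := by
    rw [hδ, Real.inv_rpow h1.le, Real.rpow_neg h1.le]
  rw [this] at i1
  calc _ = c * ((1 + t) ^ (-p) / p) := by ring
    _ ≤ _ := by linarith

lemma rpow_exp_bd {p t y : ℝ} (hp : 0 < p) (ht : 0 ≤ t) (hy : 0 < y) (hy2 : y ≤ 2) :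
    y ^ p * Real.exp (-(t * y)) ≤ Real.exp 2 * p ^ p * (1 + t) ^ (-p) := by
  have h1 : (0:ℝ) < 1 + t := by linarith
  have hx : 0 < (1 + t) * y := by positivity
  have e1 : (1 + t) * y / p ≤ Real.exp ((1 + t) * y / p) := by
    linarith [Real.add_one_le_exp ((1 + t) * y / p)]
  have e2 : ((1 + t) * y / p) ^ p ≤ Real.exp ((1 + t) * y) := by
    calc _ ≤ (Real.exp ((1 + t) * y / p)) ^ p :=
          Real.rpow_le_rpow (by positivity) e1 hp.le
      _ = _ := by rw [← Real.exp_mul]; congr 1; field_simp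
  rw [Real.div_rpow hx.le hp.le, Real.mul_rpow h1.le hy.le, div_le_iff₀ (by positivity)] at e2
  have e3 : Real.exp (-(t * y)) ≤ Real.exp 2 * Real.exp (-((1 + t) * y)) := by
    rw [← Real.exp_add]
    exact Real.exp_le_exp.2 (by linarith)
  have hq : 0 < (1 + t) ^ p := Real.rpow_pos_of_pos h1 _
  have e4 : y ^ p ≤ Real.exp ((1 + t) * y) * p ^ p * (1 + t) ^ (-p) := by
    rw [Real.rpow_neg h1.le, ← div_eq_mul_inv, le_div_iff₀ hq]; linarith
  calc _ ≤ (Real.exp ((1 + t) * y) * p ^ p * (1 + t) ^ (-p)) *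
        (Real.exp 2 * Real.exp (-((1 + t) * y))) :=
        mul_le_mul e4 e3 (Real.exp_pos _).le (by positivity)
    _ = (Real.exp ((1 + t) * y) * Real.exp (-((1 + t) * y))) *
        (Real.exp 2 * p ^ p * (1 + t) ^ (-p)) := by ring
    _ = _ := by rw [← Real.exp_add]; simp

lemma w_split (k : ℝ) {y : ℝ} (hy : y ∈ Set.Ioo (0:ℝ) 2) :
    wA 0 2 1 0 y ^ (k - 1) = y ^ (k - 1) * (2 - y) ^ (k - 1) := by
  rw [← Real.mul_rpow hy.1.le (by linarith [hy.2])]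
  unfold wA; congr 1; ring

lemma rpow_step {x : ℝ} (k : ℝ) (hx : 0 < x) : x ^ (k - 1) * x = x ^ k := by
  rw [Real.rpow_sub_one hx.ne']; field_simp

lemma ee_up {k : ℝ} (hk : 0 < k) : ∃ C, 0 < C ∧ ∀ t, 0 ≤ t →
    ee k t ≤ C * Real.exp t * (1 + t) ^ (-k) := by
  refine ⟨2 ^ k * (Real.exp 2 * Real.Gamma k), ?_, ?_⟩
  · have := Real.Gamma_pos_of_pos hk
    positivity
  intro t ht
  have hw := wA_int hk (by norm_num) ypos
  have hr : IntervalIntegrable (fun y : ℝ => y ^ (k - 1)) volume 0 2 :=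
    intervalIntegral.intervalIntegrable_rpow' (by linarith)
  rw [ee_pos_eq]
  have : ∫ y in (0:ℝ)..2, (Real.exp (-(t * y)) * (2 - y)) * wA 0 2 1 0 y ^ (k - 1)
      ≤ ∫ y in (0:ℝ)..2, 2 ^ k * (y ^ (k - 1) * Real.exp (-(t * y))) := by
    refine intervalIntegral.integral_mono_on_of_le_Ioo (by norm_num)
      (hw.continuousOn_mul (by fun_prop)) ((hr.mul_continuousOn (by fun_prop)).const_mul _) ?_
    intro y hy
    rw [w_split k hy]
    have e1 := rpow_step k (by linarith [hy.2] : 0 < 2 - y)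
    have e2 : (2 - y) ^ k ≤ 2 ^ k :=
      Real.rpow_le_rpow (by linarith [hy.2]) (by linarith [hy.1]) hk.le
    calc _ = ((2 - y) ^ (k - 1) * (2 - y)) * (y ^ (k - 1) * Real.exp (-(t * y))) := by ring
      _ ≤ _ := by
        rw [e1]
        exact mul_le_mul_of_nonneg_right e2
          (mul_nonneg (Real.rpow_nonneg hy.1.le _) (Real.exp_pos _).le)
  rw [intervalIntegral.integral_const_mul] at this
  have h2 := mul_le_mul_of_nonneg_left (up_gamma hk ht) (by positivity : (0:ℝ) ≤ 2 ^ k)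
  have h3 := mul_le_mul_of_nonneg_left (this.trans h2) (Real.exp_pos t).le
  refine h3.trans (le_of_eq ?_)
  ring

lemma ee_low {k : ℝ} (hk : 0 < k) : ∃ c, 0 < c ∧ ∀ t, 0 ≤ t →
    c * Real.exp t * (1 + t) ^ (-k) ≤ ee k t := by
  refine ⟨Real.exp (-1) / k, by positivity, ?_⟩
  intro t ht
  have hw := wA_int hk (by norm_num) ypos
  rw [ee_pos_eq]
  have := low_bd (p := k) (t := t) (c := Real.exp (-1))
    (f := fun y => (Real.exp (-(t * y)) * (2 - y)) * wA 0 2 1 0 y ^ (k - 1)) hk ht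
    (hw.continuousOn_mul (by fun_prop)) ?_ ?_
  · have h3 := mul_le_mul_of_nonneg_left this (Real.exp_pos t).le
    refine le_trans (le_of_eq ?_) h3
    ring
  · intro y hy
    have := wA_nonneg ypos ⟨hy.1.le, hy.2.le⟩
    have h2 : 0 < 2 - y := by linarith [hy.2]
    positivity
  · intro y hy hty
    have hy2 : y ∈ Set.Ioo (0:ℝ) 2 := ⟨hy.1, by linarith [hy.2]⟩
    rw [w_split k hy2]
    have e1 := rpow_step k (by linarith [hy.2] : 0 < 2 - y)
    have e2 : 1 ≤ (2 - y) ^ k := Real.one_le_rpow (by linarith [hy.2]) hk.le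
    have e3 : Real.exp (-1) ≤ Real.exp (-(t * y)) := Real.exp_le_exp.2 (by linarith)
    have e4 : 0 ≤ y ^ (k - 1) := Real.rpow_nonneg hy.1.le _
    calc Real.exp (-1) * y ^ (k - 1) ≤ Real.exp (-(t * y)) * y ^ (k - 1) :=
          mul_le_mul_of_nonneg_right e3 e4
      _ = Real.exp (-(t * y)) * y ^ (k - 1) * 1 := by ring
      _ ≤ Real.exp (-(t * y)) * y ^ (k - 1) * (2 - y) ^ k :=
          mul_le_mul_of_nonneg_left e2 (mul_nonneg (Real.exp_pos _).le e4)
      _ = _ := by rw [← e1]; ring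

lemma ee_up' {k : ℝ} (hk : 0 < k) : ∃ C, 0 < C ∧ ∀ t, 0 ≤ t →
    ee k (-t) ≤ C * Real.exp t * (1 + t) ^ (-(k + 1)) := by
  have hr2 : IntervalIntegrable (fun x : ℝ => (2 - x) ^ (k - 1)) volume 0 2 := by
    have := (intervalIntegral.intervalIntegrable_rpow' (a := 2) (b := 0)
      (r := k - 1) (by linarith)).comp_sub_left 2
    simpa using this
  set N := ∫ y in (0:ℝ)..2, (2 - y) ^ (k - 1) with hN
  have hN0 : 0 ≤ N := by
    refine intervalIntegral.integral_nonneg (by norm_num) ?_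
    intro y hy
    exact Real.rpow_nonneg (by linarith [hy.2]) _
  refine ⟨2⁻¹ * (2 ^ k * (Real.exp 2 * Real.Gamma (k + 1)))
    + 2⁻¹ * (Real.exp 2 * (k + 1) ^ (k + 1)) * N, ?_, ?_⟩
  · have := Real.Gamma_pos_of_pos (by linarith : 0 < k + 1)
    positivity
  intro t ht
  have hw := wA_int hk (by norm_num) ypos
  have hr : IntervalIntegrable (fun y : ℝ => y ^ (k + 1 - 1)) volume 0 2 :=
    intervalIntegral.intervalIntegrable_rpow' (by linarith)
  rw [ee_neg_eq]
  have h1 : (0:ℝ) < 1 + t := by linarith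
  have : ∫ y in (0:ℝ)..2, (Real.exp (-(t * y)) * y) * wA 0 2 1 0 y ^ (k - 1)
      ≤ ∫ y in (0:ℝ)..2, (2⁻¹ * 2 ^ k * (y ^ (k + 1 - 1) * Real.exp (-(t * y)))
        + 2⁻¹ * (Real.exp 2 * (k + 1) ^ (k + 1) * (1 + t) ^ (-(k + 1))) * (2 - y) ^ (k - 1)) := by
    refine intervalIntegral.integral_mono_on_of_le_Ioo (by norm_num)
      (hw.continuousOn_mul (by fun_prop)) (((hr.mul_continuousOn (by fun_prop)).const_mul _).add
        (hr2.const_mul _)) ?_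
    intro y hy
    rw [w_split k hy]
    have e1 := rpow_step k (by linarith [hy.2] : 0 < 2 - y)
    have e1' := rpow_step k hy.1
    have e1'' := rpow_step (k + 1) hy.1
    have e2 : (2 - y) ^ k ≤ 2 ^ k :=
      Real.rpow_le_rpow (by linarith [hy.2]) (by linarith [hy.1]) hk.le
    have e5 := rpow_exp_bd (by linarith : 0 < k + 1) ht hy.1 hy.2.le
    have e6 : 0 ≤ (2 - y) ^ (k - 1) := Real.rpow_nonneg (by linarith [hy.2]) _
    rw [show k + 1 - 1 = k by ring] at e1'' ⊢
    have e7 : 0 ≤ y ^ k * Real.exp (-(t * y)) :=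
      mul_nonneg (Real.rpow_nonneg hy.1.le _) (Real.exp_pos _).le
    calc _ = 2⁻¹ * ((2 - y) ^ (k - 1) * (2 - y)) * ((y ^ (k - 1) * y) * Real.exp (-(t * y)))
          + 2⁻¹ * ((y ^ (k - 1) * y) * y * Real.exp (-(t * y))) * (2 - y) ^ (k - 1) := by ring
      _ ≤ _ := by
        rw [e1, e1', e1'']
        have f1 := mul_le_mul_of_nonneg_right e2 e7
        have f2 := mul_le_mul_of_nonneg_right e5 e6
        linarith
  rw [intervalIntegral.integral_add ((hr.mul_continuousOn (by fun_prop)).const_mul _)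
        (hr2.const_mul _), intervalIntegral.integral_const_mul,
        intervalIntegral.integral_const_mul, ← hN] at this
  have h2 := mul_le_mul_of_nonneg_left (up_gamma (by linarith : 0 < k + 1) ht)
    (by positivity : (0:ℝ) ≤ 2⁻¹ * 2 ^ k)
  have h3 := mul_le_mul_of_nonneg_left (this.trans (add_le_add_left h2 _)) (Real.exp_pos t).le
  refine h3.trans (le_of_eq ?_)
  ring

lemma ee_low' {k : ℝ} (hk : 0 < k) : ∃ c, 0 < c ∧ ∀ t, 0 ≤ t →
    c * Real.exp t * (1 + t) ^ (-(k + 1)) ≤ ee k (-t) := by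
  refine ⟨Real.exp (-1) * (1 / 2) / (k + 1), by positivity, ?_⟩
  intro t ht
  have hw := wA_int hk (by norm_num) ypos
  rw [ee_neg_eq]
  have := low_bd (p := k + 1) (t := t) (c := Real.exp (-1) * (1 / 2))
    (f := fun y => (Real.exp (-(t * y)) * y) * wA 0 2 1 0 y ^ (k - 1)) (by linarith) ht
    (hw.continuousOn_mul (by fun_prop)) ?_ ?_
  · have h3 := mul_le_mul_of_nonneg_left this (Real.exp_pos t).le
    refine le_trans (le_of_eq ?_) h3
    ring
  · intro y hy
    have := wA_nonneg ypos ⟨hy.1.le, hy.2.le⟩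
    have h2 : 0 < y := hy.1
    positivity
  · intro y hy hty
    have hy2 : y ∈ Set.Ioo (0:ℝ) 2 := ⟨hy.1, by linarith [hy.2]⟩
    rw [w_split k hy2]
    have e1 := rpow_step k hy.1
    have hpos : 0 < 2 - y := by linarith [hy.2]
    have e2 : 1 / 2 ≤ (2 - y) ^ (k - 1) := by
      have g1 : 1 ≤ (2 - y) ^ k := Real.one_le_rpow (by linarith [hy.2]) hk.le
      rw [Real.rpow_sub_one hpos.ne', le_div_iff₀ hpos]
      linarith [hy.1]
    have e3 : Real.exp (-1) ≤ Real.exp (-(t * y)) := Real.exp_le_exp.2 (by linarith)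
    have e4 : 0 ≤ y ^ k := Real.rpow_nonneg hy.1.le _
    rw [show k + 1 - 1 = k by ring]
    calc Real.exp (-1) * (1 / 2) * y ^ k
        ≤ (Real.exp (-(t * y)) * (2 - y) ^ (k - 1)) * y ^ k :=
          mul_le_mul_of_nonneg_right (mul_le_mul e3 e2 (by norm_num) (Real.exp_pos _).le) e4
      _ = _ := by rw [← e1]; ring

lemma cv_up {p t : ℝ} (hp : 0 < p) (ht : 0 ≤ t) : (1 + t) ^ (-p) ≤ 2 ^ p * ((1 + 2 * t) ^ p)⁻¹ := by
  rw [Real.rpow_neg (by linarith), ← div_eq_mul_inv, le_div_iff₀ (by positivity),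
    inv_mul_le_iff₀ (by positivity), ← Real.mul_rpow (by linarith) (by norm_num)]
  exact Real.rpow_le_rpow (by linarith) (by linarith) hp.le

lemma cv_low {p t : ℝ} (hp : 0 < p) (ht : 0 ≤ t) : ((1 + 2 * t) ^ p)⁻¹ ≤ (1 + t) ^ (-p) := by
  rw [Real.rpow_neg (by linarith)]
  apply inv_anti₀ (by positivity)
  exact Real.rpow_le_rpow (by linarith) (by linarith) hp.le

lemma ee_all {k : ℝ} (hk : 0 < k) : ∃ c C, 0 < c ∧ 0 < C ∧ ∀ t, 0 ≤ t →
    c * (Real.exp t * ((1 + 2 * t) ^ k)⁻¹) ≤ ee k t ∧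
    ee k t ≤ C * (Real.exp t * ((1 + 2 * t) ^ k)⁻¹) ∧
    c * (Real.exp t * ((1 + 2 * t) ^ (k + 1))⁻¹) ≤ ee k (-t) ∧
    ee k (-t) ≤ C * (Real.exp t * ((1 + 2 * t) ^ (k + 1))⁻¹) := by
  obtain ⟨C1, h1, H1⟩ := ee_up hk
  obtain ⟨C2, h2, H2⟩ := ee_up' hk
  obtain ⟨c1, h3, H3⟩ := ee_low hk
  obtain ⟨c2, h4, H4⟩ := ee_low' hk
  refine ⟨min c1 c2, max (C1 * 2 ^ k) (C2 * 2 ^ (k + 1)), lt_min h3 h4,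
    lt_max_of_lt_left (by positivity), ?_⟩
  intro t ht
  have hk1 : 0 < k + 1 := by linarith
  have q1 : 0 ≤ Real.exp t * ((1 + 2 * t) ^ k)⁻¹ := by positivity
  have q2 : 0 ≤ Real.exp t * ((1 + 2 * t) ^ (k + 1))⁻¹ := by positivity
  refine ⟨?_, ?_, ?_, ?_⟩
  · refine le_trans ?_ (H3 t ht)
    refine (mul_le_mul_of_nonneg_right (min_le_left _ _) q1).trans ?_
    rw [← mul_assoc]
    exact mul_le_mul_of_nonneg_left (cv_low hk ht) (by positivity)
  · refine (H1 t ht).trans ?_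
    refine le_trans ?_ (mul_le_mul_of_nonneg_right (le_max_left _ _) q1)
    refine (mul_le_mul_of_nonneg_left (cv_up hk ht) (by positivity)).trans (le_of_eq ?_)
    ring
  · refine le_trans ?_ (H4 t ht)
    refine (mul_le_mul_of_nonneg_right (min_le_right _ _) q2).trans ?_
    rw [← mul_assoc]
    exact mul_le_mul_of_nonneg_left (cv_low hk1 ht) (by positivity)
  · refine (H2 t ht).trans ?_
    refine le_trans ?_ (mul_le_mul_of_nonneg_right (le_max_right _ _) q2)
    refine (mul_le_mul_of_nonneg_left (cv_up hk1 ht) (by positivity)).trans (le_of_eq ?_)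
    ring

noncomputable def TT (k l1 l2 l3 x1 x2 x3 n1 n2 : ℝ) : ℝ :=
  (n1 - n2) * ((l2 - l3) + (x2 - x3) * (n1 - l3) * (l2 - n2))
            / (1 + (x2 - x3) * (n1 - n2)) ^ (k + 1)
          * ((l1 - n1) * (l1 - n2)) * Real.exp ((x2 - x1) * n1 + (x3 - x1) * n2)

lemma TT_c {k l1 l2 l3 x1 x2 x3 : ℝ} (hx : x3 ≤ x2) :
    ContinuousOn (fun w : ℝ × ℝ => TT k l1 l2 l3 x1 x2 x3 w.1 w.2)
      (Set.Icc l2 l1 ×ˢ Set.Icc l3 l2) := by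
  unfold TT
  have hp : ∀ w ∈ Set.Icc l2 l1 ×ˢ Set.Icc l3 l2, (1 + (x2 - x3) * (w.1 - w.2)) ≠ 0 := by
    rintro ⟨x, y⟩ ⟨⟨h1, h2⟩, ⟨h3, h4⟩⟩
    simp only at *
    have : 0 ≤ (x2 - x3) * (x - y) := mul_nonneg (by linarith) (by linarith)
    linarith
  have hq : ∀ w ∈ Set.Icc l2 l1 ×ˢ Set.Icc l3 l2, (1 + (x2 - x3) * (w.1 - w.2)) ^ (k + 1) ≠ 0 := by
    rintro ⟨x, y⟩ ⟨⟨h1, h2⟩, ⟨h3, h4⟩⟩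
    simp only at *
    have : 0 ≤ (x2 - x3) * (x - y) := mul_nonneg (by linarith) (by linarith)
    positivity
  refine ContinuousOn.mul (ContinuousOn.mul (ContinuousOn.div (by fun_prop) ?_ hq) (by fun_prop))
    (by fun_prop)
  exact ContinuousOn.rpow_const (by fun_prop) (fun w hw => Or.inl (hp w hw))

lemma TT_eq {k l1 l2 l3 x1 x2 x3 x y : ℝ} (hx : x3 ≤ x2) (hxy : y ≤ x) :
    TT k l1 l2 l3 x1 x2 x3 x y = (l1 - x) * (l1 - y) * Real.exp ((x2 - x1) * x + (x3 - x1) * y) *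
     ((l2 - y) * (x - l3) * ((1 + (x2 - x3) * (x - y)) ^ k)⁻¹ +
      (y - l3) * (x - l2) * ((1 + (x2 - x3) * (x - y)) ^ (k + 1))⁻¹) := by
  have h0 : 0 ≤ (x2 - x3) * (x - y) := mul_nonneg (by linarith) (by linarith)
  have hB : 0 < 1 + (x2 - x3) * (x - y) := by linarith
  have e1 : ((1 + (x2 - x3) * (x - y)) ^ k)⁻¹ =
      (1 + (x2 - x3) * (x - y)) * ((1 + (x2 - x3) * (x - y)) ^ (k + 1))⁻¹ := by
    rw [Real.rpow_add hB, Real.rpow_one]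
    have := (Real.rpow_pos_of_pos hB k).ne'
    field_simp
  rw [e1]
  unfold TT
  rw [div_eq_mul_inv]
  ring

lemma pt_bd {k c C l1 l2 l3 x1 x2 x3 : ℝ} (hx : x3 ≤ x2)
    (H : ∀ t, 0 ≤ t →
    c * (Real.exp t * ((1 + 2 * t) ^ k)⁻¹) ≤ ee k t ∧
    ee k t ≤ C * (Real.exp t * ((1 + 2 * t) ^ k)⁻¹) ∧
    c * (Real.exp t * ((1 + 2 * t) ^ (k + 1))⁻¹) ≤ ee k (-t) ∧
    ee k (-t) ≤ C * (Real.exp t * ((1 + 2 * t) ^ (k + 1))⁻¹))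
    {x y : ℝ} (hx1 : l2 ≤ x) (hx2 : x ≤ l1) (hy1 : l3 ≤ y) (hy2 : y ≤ l2) :
    0 ≤ TT k l1 l2 l3 x1 x2 x3 x y ∧
    c * TT k l1 l2 l3 x1 x2 x3 x y ≤
      gi k ((2*x1-x2-x3)/2) ((x2-x3)/2) (-l3) (-l2) (-l1) 1 (-y, -x) ∧
      gi k ((2*x1-x2-x3)/2) ((x2-x3)/2) (-l3) (-l2) (-l1) 1 (-y, -x) ≤
    C * TT k l1 l2 l3 x1 x2 x3 x y := by
  have hxy : y ≤ x := by linarith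
  have h0 : 0 ≤ (x2 - x3) * (x - y) := mul_nonneg (by linarith) (by linarith)
  have hP : 0 ≤ (l1 - x) * (l1 - y) := mul_nonneg (by linarith) (by linarith)
  have hA : 0 ≤ (l2 - y) * (x - l3) := mul_nonneg (by linarith) (by linarith)
  have hB : 0 ≤ (y - l3) * (x - l2) := mul_nonneg (by linarith) (by linarith)
  obtain ⟨a1, a2, a3, a4⟩ := H ((x2 - x3) / 2 * (x - y)) (by linarith)
  have e2 : 1 + 2 * ((x2 - x3) / 2 * (x - y)) = 1 + (x2 - x3) * (x - y) := by ring
  rw [e2] at a1 a2 a3 a4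
  have eg : gi k ((2*x1-x2-x3)/2) ((x2-x3)/2) (-l3) (-l2) (-l1) 1 (-y, -x) =
      (l1 - x) * (l1 - y) * Real.exp (-((2*x1-x2-x3)/2 * (x + y))) *
      ((l2 - y) * (x - l3) * ee k ((x2 - x3) / 2 * (x - y)) +
       (y - l3) * (x - l2) * ee k (-((x2 - x3) / 2 * (x - y)))) := by
    unfold gi K1 K2 ph
    rw [show 1 * ((2*x1-x2-x3)/2 * ((-y, -x).1 + (-y, -x).2)) = -((2*x1-x2-x3)/2 * (x + y)) by
        simp only; ring,
      show 1 * ((x2-x3)/2 * ((-y, -x).1 - (-y, -x).2)) = (x2 - x3) / 2 * (x - y) by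
        simp only; ring,
      show 1 * (-((x2-x3)/2) * ((-y, -x).1 - (-y, -x).2)) = -((x2 - x3) / 2 * (x - y)) by
        simp only; ring]
    ring
  have ex : Real.exp ((x2 - x1) * x + (x3 - x1) * y) =
      Real.exp (-((2*x1-x2-x3)/2 * (x + y))) * Real.exp ((x2 - x3) / 2 * (x - y)) := by
    rw [← Real.exp_add]; congr 1; ring
  rw [TT_eq hx hxy, eg, ex]
  generalize ee k ((x2 - x3) / 2 * (x - y)) = u at *
  generalize ee k (-((x2 - x3) / 2 * (x - y))) = v at *
  have hE := Real.exp_pos (-((2*x1-x2-x3)/2 * (x + y)))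
  have hF := Real.exp_pos ((x2 - x3) / 2 * (x - y))
  have hp1 : 0 < ((1 + (x2 - x3) * (x - y)) ^ k)⁻¹ := by positivity
  have hp2 : 0 < ((1 + (x2 - x3) * (x - y)) ^ (k + 1))⁻¹ := by positivity
  generalize ((1 + (x2 - x3) * (x - y)) ^ k)⁻¹ = p at *
  generalize ((1 + (x2 - x3) * (x - y)) ^ (k + 1))⁻¹ = q at *
  generalize Real.exp (-((2*x1-x2-x3)/2 * (x + y))) = E at *
  generalize Real.exp ((x2 - x3) / 2 * (x - y)) = F at *
  generalize (l1 - x) * (l1 - y) = P at *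
  generalize (l2 - y) * (x - l3) = A at *
  generalize (y - l3) * (x - l2) = B at *
  refine ⟨by positivity, ?_, ?_⟩
  · calc _ = P * E * (A * (c * (F * p)) + B * (c * (F * q))) := by ring
      _ ≤ _ := by gcongr
  · calc _ ≤ P * E * (A * (C * (F * p)) + B * (C * (F * q))) := by gcongr
      _ = _ := by ring

lemma Ek_eq {k : ℝ} (hk : 0 < k) {l1 l2 l3 : ℝ} (h12 : l2 < l1) (h23 : l3 < l2) (x1 x2 x3 : ℝ) :
    Vlam l1 l2 l3 ^ (2 * k) * EkA2 k x1 x2 x3 l1 l2 l3 =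
      (3 * Real.Gamma (3 * k) / Real.Gamma k ^ 2 *
        (Real.Gamma (k + 1/2) / (Real.sqrt Real.pi * Real.Gamma k))) *
      Gf k l1 l2 l3 ((x1+x2-2*x3)/2) ((x1-x2)/2) l1 l2 l3 1 := by
  have hV : 0 < Vlam l1 l2 l3 ^ (2 * k) := by
    apply Real.rpow_pos_of_pos
    unfold Vlam
    exact mul_pos (mul_pos (by linarith) (by linarith)) (by linarith)
  have hG := Real.Gamma_pos_of_pos hk
  set ck := (Real.Gamma (k + 1/2) / (Real.sqrt Real.pi * Real.Gamma k)) with hck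
  have hi : (∫ n2 in l3..l2, ∫ n1 in l2..l1,
      ((n1 - l2) * (l1 - n2) * Erk1 k ((x1 - x2) / 2) (n1 - n2)
        + (l1 - n1) * (l2 - n2) * Erk1 k (-(x1 - x2) / 2) (n1 - n2))
      * ((n1 - l3) * (n2 - l3)) * Real.exp ((x1 + x2 - 2 * x3) * (n1 + n2) / 2)
      * Wk k l1 l2 l3 n1 n2) = ck * Gf k l1 l2 l3 ((x1+x2-2*x3)/2) ((x1-x2)/2) l1 l2 l3 1 := by
    have hgc := (gi_c hk ((x1+x2-2*x3)/2) ((x1-x2)/2) l1 l2 l3 1).continuousOn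
      (s := Set.Icc l2 l1 ×ˢ Set.Icc l3 l2)
    have := mm_eq hk h12 h23
      (f := fun x y => gi k ((x1+x2-2*x3)/2) ((x1-x2)/2) l1 l2 l3 1 (x, y)) hgc
    unfold Gf
    rw [show (∫ w, gi k ((x1+x2-2*x3)/2) ((x1-x2)/2) l1 l2 l3 1 w ∂mm k l1 l2 l3) = _ from this,
      ← intervalIntegral.integral_const_mul]
    congr 1
    funext n2
    rw [← intervalIntegral.integral_const_mul]
    congr 1
    funext n1
    rw [Erk1_eq, Erk1_eq, ← hck]
    unfold gi K1 K2 ph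
    simp only
    rw [show 1 * ((x1+x2-2*x3)/2 * (n1 + n2)) = (x1 + x2 - 2 * x3) * (n1 + n2) / 2 by ring,
      show 1 * ((x1-x2)/2 * (n1 - n2)) = (x1-x2)/2 * (n1 - n2) by ring,
      show 1 * (-((x1-x2)/2) * (n1 - n2)) = -(x1-x2)/2 * (n1 - n2) by ring]
    ring
  unfold EkA2
  rw [hi]
  field_simp

/-- Lemma 5.x: two-sided estimate for `V(λ)^{2k} E_k(X,λ)`. -/
theorem lemma_beta_plus (k : ℝ) (hk : 0 < k) :
    ∃ C : ℝ, 0 < C ∧ ∀ l1 l2 l3 x1 x2 x3 : ℝ,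
      l1 + l2 + l3 = 0 →
      l2 < l1 →
      l3 < l2 →
      x1 + x2 + x3 = 0 →
      x3 ≤ x2 →
      (C⁻¹ * (∫ n2 in l3..l2, ∫ n1 in l2..l1,
          (n1 - n2) * ((l2 - l3) + (x2 - x3) * (n1 - l3) * (l2 - n2))
            / (1 + (x2 - x3) * (n1 - n2)) ^ (k + 1)
          * ((l1 - n1) * (l1 - n2)) * Real.exp ((x2 - x1) * n1 + (x3 - x1) * n2)
          * Wk k l1 l2 l3 n1 n2)
        ≤ Vlam l1 l2 l3 ^ (2 * k) * EkA2 k x1 x2 x3 l1 l2 l3 ∧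
      Vlam l1 l2 l3 ^ (2 * k) * EkA2 k x1 x2 x3 l1 l2 l3
        ≤ C * (∫ n2 in l3..l2, ∫ n1 in l2..l1,
          (n1 - n2) * ((l2 - l3) + (x2 - x3) * (n1 - l3) * (l2 - n2))
            / (1 + (x2 - x3) * (n1 - n2)) ^ (k + 1)
          * ((l1 - n1) * (l1 - n2)) * Real.exp ((x2 - x1) * n1 + (x3 - x1) * n2)
          * Wk k l1 l2 l3 n1 n2)) := by
  obtain ⟨c, C, hc, hC, H⟩ := ee_all hk
  have hG := Real.Gamma_pos_of_pos hk
  have hG3 := Real.Gamma_pos_of_pos (show 0 < 3 * k by linarith)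
  have hG2 := Real.Gamma_pos_of_pos (show 0 < k + 1/2 by linarith)
  obtain ⟨N, hN⟩ : ∃ N, N = (3 * Real.Gamma (3 * k) / Real.Gamma k ^ 2 *
        (Real.Gamma (k + 1/2) / (Real.sqrt Real.pi * Real.Gamma k))) := ⟨_, rfl⟩
  have hNp : 0 < N := by rw [hN]; positivity
  refine ⟨N * C + (N * c)⁻¹, by positivity, ?_⟩
  intro l1 l2 l3 x1 x2 x3 hl h12 h23 _ hx
  have hT := TT_c (k := k) (l1 := l1) (l2 := l2) (l3 := l3) (x1 := x1) hx
  have hI := mm_eq hk h12 h23 (f := TT k l1 l2 l3 x1 x2 x3) hT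
  have hTi := mm_int hk h12 h23 hT
  rw [Ek_eq hk h12 h23, ← hN, duality hk h12 h23 hl]
  have hgc := gi_c hk ((2*x1-x2-x3)/2) ((x2-x3)/2) (-l3) (-l2) (-l1) 1
  have hg : Gf k (-l3) (-l2) (-l1) ((2*x1-x2-x3)/2) ((x2-x3)/2) (-l3) (-l2) (-l1) 1 = 
      ∫ w : ℝ × ℝ, gi k ((2*x1-x2-x3)/2) ((x2-x3)/2) (-l3) (-l2) (-l1) 1 (-w.2, -w.1)
        ∂(mm k l1 l2 l3) :=
    mm_flip hk h12 h23
      (f := fun x y => gi k ((2*x1-x2-x3)/2) ((x2-x3)/2) (-l3) (-l2) (-l1) 1 (x, y)) hgc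
  have hgi : Integrable (fun w : ℝ × ℝ =>
      gi k ((2*x1-x2-x3)/2) ((x2-x3)/2) (-l3) (-l2) (-l1) 1 (-w.2, -w.1)) (mm k l1 l2 l3) :=
    mm_int hk h12 h23 (hgc.comp (by fun_prop : Continuous fun w : ℝ × ℝ => (-w.2, -w.1))).continuousOn
  have hmem := mm_mem hk h12 h23
  have b0 : 0 ≤ ∫ w, TT k l1 l2 l3 x1 x2 x3 w.1 w.2 ∂(mm k l1 l2 l3) := by
    apply integral_nonneg_of_ae
    filter_upwards [hmem] with w hw
    exact (pt_bd hx H hw.1.1 hw.1.2 hw.2.1 hw.2.2).1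
  have b1 : c * ∫ w, TT k l1 l2 l3 x1 x2 x3 w.1 w.2 ∂(mm k l1 l2 l3) ≤
      ∫ w : ℝ × ℝ, gi k ((2*x1-x2-x3)/2) ((x2-x3)/2) (-l3) (-l2) (-l1) 1 (-w.2, -w.1)
        ∂(mm k l1 l2 l3) := by
    rw [← integral_const_mul]
    apply integral_mono_ae (hTi.const_mul c) hgi
    filter_upwards [hmem] with w hw
    exact (pt_bd hx H hw.1.1 hw.1.2 hw.2.1 hw.2.2).2.1
  have b2 : (∫ w : ℝ × ℝ, gi k ((2*x1-x2-x3)/2) ((x2-x3)/2) (-l3) (-l2) (-l1) 1 (-w.2, -w.1)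
        ∂(mm k l1 l2 l3)) ≤ C * ∫ w, TT k l1 l2 l3 x1 x2 x3 w.1 w.2 ∂(mm k l1 l2 l3) := by
    rw [← integral_const_mul]
    apply integral_mono_ae hgi (hTi.const_mul C)
    filter_upwards [hmem] with w hw
    exact (pt_bd hx H hw.1.1 hw.1.2 hw.2.1 hw.2.2).2.2
  rw [hg]
  rw [hI] at b0 b1 b2
  unfold TT at b0 b1 b2
  generalize (∫ w : ℝ × ℝ, gi k ((2*x1-x2-x3)/2) ((x2-x3)/2) (-l3) (-l2) (-l1) 1 (-w.2, -w.1)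
        ∂(mm k l1 l2 l3)) = G at *
  constructor
  · refine le_trans (mul_le_mul_of_nonneg_right (show _ ≤ N * c from ?_) b0) ?_
    · rw [inv_le_comm₀ (by positivity) (by positivity)]
      have : 0 < N * C := by positivity
      linarith
    · rw [mul_assoc]
      exact mul_le_mul_of_nonneg_left b1 hNp.le
  · refine (mul_le_mul_of_nonneg_left b2 hNp.le).trans ?_
    rw [← mul_assoc]
    apply mul_le_mul_of_nonneg_right _ b0
    have : 0 < (N * c)⁻¹ := by positivity
    linarith
end
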